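/- arXiv:1508.05511 — 5 statements merged into one kernel-verified Lean document; each statement's English description precedes it below -/
import Mathlib

section
/- Let u : A → A' be a flat local homomorphism of Noetherian local domains of Krull dimension one, with maximal ideals m ⊆ A and m' ⊆ A', such that mA' = m'. Assume ℚ ⊆ A, and that there exist ring homomorphisms k → A and k' → A' splitting the quotient maps A → k := A/m and A' → k' := A'/mA' respectively, with u(k) ⊆ k'. Then every A-algebra homomorphism v : B → A' from a finite type A-algebra B factors through a standard smooth A-algebra B', i.e. there exist a standard smooth A-algebra B' and A-algebra homomorphisms B → B' and B' → A' whose composite is v. -/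
universe u

open MvPolynomial in
/-- `B` is standard smooth over `A`: there is a presentation `B ≅ A[Y₁,…,Yₙ]/I` and a
system of polynomials `f = (f₁,…,f_r)` in `I`, `r ≤ n`, such that
`1 ∈ ((f):I)·Δ_f·B`, where `Δ_f` is the ideal generated by the `r × r` minors of the
Jacobian matrix `(∂fᵢ/∂Yⱼ)`. -/
def IsStandardSmoothP (A B : Type u) [CommRing A] [CommRing B] [Algebra A B] : Prop :=
  ∃ (n r : ℕ), r ≤ n ∧
    ∃ (I : Ideal (MvPolynomial (Fin n) A))
      (_e : ((MvPolynomial (Fin n) A) ⧸ I) ≃ₐ[A] B)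
      (f : Fin r → MvPolynomial (Fin n) A),
      (∀ i, f i ∈ I) ∧
      (1 : (MvPolynomial (Fin n) A) ⧸ I) ∈
        Ideal.map (Ideal.Quotient.mk I)
          ((Ideal.span (Set.range f)).colon I *
            Ideal.span {d : MvPolynomial (Fin n) A |
              ∃ c : Fin r ↪ Fin n,
                d = (Matrix.of fun i j : Fin r => pderiv (c j) (f i)).det})

open MvPolynomial
open scoped Matrix

/-- Second order Taylor expansion of a polynomial along an increment divisible by `d`. -/
lemma MvPolynomial.exists_aeval_add_mul_eq {σ R S : Type*} [Fintype σ] [CommRing R] [CommRing S]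
    [Algebra R S] (F : MvPolynomial σ R) (y V : σ → S) (d : S) :
    ∃ Q ∈ Ideal.span (Set.range V) ^ 2,
      aeval (fun i => y i + d * V i) F =
        aeval y F + d * ∑ i, aeval y (pderiv i F) * V i + d ^ 2 * Q := by
  classical
  induction F using MvPolynomial.induction_on with
  | C a => exact ⟨0, zero_mem _, by simp⟩
  | add p q hp hq =>
    obtain ⟨P, hP, hp⟩ := hp
    obtain ⟨Q, hQ, hq⟩ := hq
    refine ⟨P + Q, add_mem hP hQ, ?_⟩
    simp only [map_add, hp, hq, add_mul, Finset.sum_add_distrib]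
    ring
  | mul_X p j hp =>
    obtain ⟨P, hP, hp⟩ := hp
    have hV (i : σ) : V i ∈ Ideal.span (Set.range V) := Ideal.subset_span ⟨i, rfl⟩
    refine ⟨P * y j + (∑ i, aeval y (pderiv i p) * V i) * V j + d * V j * P,
      add_mem (add_mem (Ideal.mul_mem_right _ _ hP) ?_) (Ideal.mul_mem_left _ _ hP), ?_⟩
    · rw [sq]
      exact Ideal.mul_mem_mul (sum_mem fun i _ => Ideal.mul_mem_left _ _ (hV i)) (hV j)
    · have h : ∑ i, aeval y (pderiv i (p * X j)) * V i =
          (∑ i, aeval y (pderiv i p) * V i) * y j + aeval y p * V j := by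
        simp only [Derivation.leibniz, smul_eq_mul, pderiv_X, map_add, map_mul, aeval_X, add_mul,
          Finset.sum_add_distrib, Finset.sum_mul]
        rw [add_comm]
        congr 1
        · exact Finset.sum_congr rfl fun i _ => by ring
        · rw [Finset.sum_eq_single j] <;> simp +contextual
      rw [h, map_mul, map_mul, hp, aeval_X, aeval_X]
      ring

/-- A matrix over a field with linearly independent rows has a nonzero maximal minor. -/
lemma Matrix.exists_det_ne_zero_of_linearIndependent {r n : ℕ} {κ : Type*} [Field κ]
    (v : Fin r → Fin n → κ) (hv : LinearIndependent κ v) :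
    ∃ c : Fin r ↪ Fin n, (Matrix.of fun i j => v i (c j)).det ≠ 0 := by
  have hsp : Submodule.span κ (Set.range (Matrix.of v)ᵀ) = ⊤ := by
    apply Submodule.eq_top_of_finrank_eq
    have := LinearIndependent.rank_matrix (M := Matrix.of v) hv
    rw [Matrix.rank_eq_finrank_span_cols] at this
    rw [Matrix.col_def] at this
    simpa using this
  obtain ⟨ι, a, ha, hspan, hli⟩ := exists_linearIndependent' κ (Matrix.of v)ᵀ
  rw [hsp] at hspan
  let b := Module.Basis.mk hli hspan.ge
  let e : Fin r ≃ ι := (Pi.basisFun κ (Fin r)).indexEquiv b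
  refine ⟨⟨a ∘ e, ha.comp e.injective⟩, ?_⟩
  have h2 : LinearIndependent κ ((Matrix.of fun i j => v i (a (e j)))ᵀ) :=
    hli.comp e e.injective
  have := Matrix.linearIndependent_cols_iff_isUnit.mp h2
  exact ((Matrix.isUnit_iff_isUnit_det _).mp this).ne_zero

/-- If the residue field of a local `A`-algebra is formally smooth over `A`, the value of a
polynomial whose partial derivatives all vanish in the residue field lies in the square of the
maximal ideal as soon as it lies in the maximal ideal. -/
lemma MvPolynomial.aeval_mem_maximalIdeal_sq {σ A L : Type*} [Fintype σ] [CommRing A] [CommRing L]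
    [IsLocalRing L] [Algebra A L] [Algebra.FormallySmooth A (IsLocalRing.ResidueField L)]
    (f : MvPolynomial σ A) (x : σ → L) (hf : aeval x f ∈ IsLocalRing.maximalIdeal L)
    (hd : ∀ i, aeval x (pderiv i f) ∈ IsLocalRing.maximalIdeal L) :
    aeval x f ∈ IsLocalRing.maximalIdeal L ^ 2 := by
  set m := IsLocalRing.maximalIdeal L
  let π : (L ⧸ m ^ 2) →ₐ[A] IsLocalRing.ResidueField L :=
    Ideal.Quotient.factorₐ A (Ideal.pow_le_self two_ne_zero)
  have hπs : Function.Surjective π := Ideal.Quotient.factor_surjective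
    (Ideal.pow_le_self two_ne_zero)
  have hker : RingHom.ker (π : (L ⧸ m ^ 2) →+* IsLocalRing.ResidueField L) ^ 2 = ⊥ := by
    have : RingHom.ker (π : (L ⧸ m ^ 2) →+* IsLocalRing.ResidueField L) =
        m.map (Ideal.Quotient.mk (m ^ 2)) :=
      Ideal.Quotient.factor_ker (Ideal.pow_le_self two_ne_zero)
    rw [this, ← Ideal.map_pow, Ideal.map_quotient_self]
  let g := Algebra.FormallySmooth.liftOfSurjective
    (AlgHom.id A (IsLocalRing.ResidueField L)) π hπs ⟨2, hker⟩
  have hg (z : IsLocalRing.ResidueField L) : π (g z) = z :=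
    Algebra.FormallySmooth.liftOfSurjective_apply _ _ _ _ z
  let φ : L →ₐ[A] (L ⧸ m ^ 2) := Ideal.Quotient.mkₐ A (m ^ 2)
  let y : σ → L ⧸ m ^ 2 := fun i => g (π (φ (x i)))
  have hy (F : MvPolynomial σ A) (hF : aeval x F ∈ m) : aeval y F = 0 := by
    have : aeval y = ((g.comp π).comp φ).comp (aeval x) := by
      ext i
      simp [y]
    rw [this]
    change g (IsLocalRing.residue L (aeval x F)) = 0
    rw [(IsLocalRing.residue_eq_zero_iff _).mpr hF, map_zero]
  obtain ⟨Q, hQ, h⟩ := f.exists_aeval_add_mul_eq y (fun i => φ (x i) - y i) 1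
  have hQ0 : Q = 0 := by
    rw [← Ideal.mem_bot, ← hker]
    refine Ideal.pow_right_mono (Ideal.span_le.mpr ?_) 2 hQ
    rintro _ ⟨i, rfl⟩
    simp [RingHom.mem_ker, y, hg]
  have hφ : aeval (fun i => φ (x i)) f = φ (aeval x f) := (comp_aeval_apply x φ f).symm
  simp only [one_mul, add_sub_cancel, hφ, hy f hf, hy _ (hd _), zero_mul, Finset.sum_const_zero,
    hQ0, mul_zero, add_zero] at h
  exact Ideal.Quotient.eq_zero_iff_mem.mp h

/-- Over a domain of characteristic zero, the residue field of a polynomial ring at a prime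
contracting to zero is formally smooth. -/
lemma MvPolynomial.formallySmooth_residueField {A : Type u} {n : ℕ} [CommRing A] [IsDomain A]
    [CharZero A] (p : Ideal (MvPolynomial (Fin n) A)) [p.IsPrime] (hp : p.comap C = ⊥) :
    Algebra.FormallySmooth A p.ResidueField := by
  have hinj : Function.Injective (algebraMap A p.ResidueField) := by
    rw [injective_iff_map_eq_zero]
    intro a ha
    rw [IsScalarTower.algebraMap_apply A (MvPolynomial (Fin n) A) p.ResidueField,
      Ideal.algebraMap_residueField_eq_zero] at ha
    have : a ∈ p.comap C := ha
    simpa [hp] using this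
  have : FaithfulSMul A p.ResidueField := (faithfulSMul_iff_algebraMap_injective A _).mpr hinj
  let : Algebra (FractionRing A) p.ResidueField := FractionRing.liftAlgebra A p.ResidueField
  have : IsScalarTower A (FractionRing A) p.ResidueField :=
    FractionRing.isScalarTower_liftAlgebra A p.ResidueField
  have : CharZero (FractionRing A) :=
    charZero_of_injective_algebraMap (IsFractionRing.injective A (FractionRing A))
  have : Algebra.EssFiniteType A p.ResidueField := .comp A (MvPolynomial (Fin n) A) _
  have : Algebra.EssFiniteType (FractionRing A) p.ResidueField := .of_comp A _ _
  have : Algebra.FormallyEtale A (FractionRing A) := .of_isLocalization (nonZeroDivisors A)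
  exact .comp A (FractionRing A) p.ResidueField

/-- Generic smoothness in characteristic zero: locally at a prime `p` of a polynomial ring which
contracts to zero, `p` is cut out by equations with a nonvanishing maximal minor. -/
lemma MvPolynomial.exists_jacobian_minor {A : Type u} {n : ℕ} [CommRing A] [IsDomain A]
    [CharZero A] [IsNoetherianRing A] (p : Ideal (MvPolynomial (Fin n) A)) [p.IsPrime]
    (hp : p.comap C = ⊥) :
    ∃ (r : ℕ) (f : Fin r → MvPolynomial (Fin n) A) (c : Fin r ↪ Fin n)
      (N : MvPolynomial (Fin n) A), (∀ i, f i ∈ p) ∧ N ∉ p ∧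
      (∀ g ∈ p, N * g ∈ Ideal.span (Set.range f)) ∧
      (Matrix.of fun i j => pderiv (c j) (f i)).det ∉ p := by
  let R := MvPolynomial (Fin n) A
  let L := Localization.AtPrime p
  let κ := p.ResidueField
  have := formallySmooth_residueField p hp
  let J : p →ₗ[R] (Fin n → κ) :=
    { toFun f := fun i => algebraMap R κ (pderiv i f.1)
      map_add' f g := by ext i; simp
      map_smul' a f := by
        ext i
        have : algebraMap R κ f.1 = 0 := Ideal.algebraMap_residueField_eq_zero.mpr f.2
        simp [Derivation.leibniz, this, Algebra.smul_def] }
  obtain ⟨ι, a, ha, hspan, hli⟩ := exists_linearIndependent' κ J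
  have : Finite ι := hli.finite
  obtain ⟨r, ⟨e⟩⟩ := Finite.exists_equiv_fin ι
  let f : Fin r → p := fun i => a (e.symm i)
  have hJf : LinearIndependent κ (J ∘ f) := hli.comp e.symm e.symm.injective
  have hspan' : Submodule.span κ (Set.range (J ∘ f)) = Submodule.span κ (Set.range J) := by
    rw [← hspan]
    congr 1
    exact e.symm.surjective.range_comp (J ∘ a)
  obtain ⟨c, hc⟩ := Matrix.exists_det_ne_zero_of_linearIndependent _ hJf
  set m := IsLocalRing.maximalIdeal L
  let q : Ideal L := (Ideal.span (Set.range fun i => (f i).1)).map (algebraMap R L)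
  have hmq : p.map (algebraMap R L) = m := Localization.AtPrime.map_eq_maximalIdeal
  have hle : m ≤ q ⊔ m • m := by
    rw [← hmq, Ideal.map_le_iff_le_comap, hmq]
    intro g hg
    have hgs : J ⟨g, hg⟩ ∈ Submodule.span κ (Set.range (J ∘ f)) := by
      rw [hspan']
      exact Submodule.subset_span ⟨_, rfl⟩
    obtain ⟨b, hb⟩ := (Submodule.mem_span_range_iff_exists_fun κ).mp hgs
    obtain ⟨s, hs⟩ := IsLocalization.exist_integer_multiples_of_finite
      (nonZeroDivisors (R ⧸ p)) b
    choose b' hb' using hs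
    obtain ⟨s', hs'⟩ := Ideal.Quotient.mk_surjective s.1
    choose b'' hb'' using fun i => Ideal.Quotient.mk_surjective (b' i)
    have hs'p : s' ∉ p := by
      rw [← Ideal.Quotient.eq_zero_iff_mem, hs']
      exact nonZeroDivisors.coe_ne_zero s
    have hbs (i) : algebraMap R κ (b'' i) = algebraMap R κ s' * b i := by
      have := hb' i
      rw [← hb'', ← hs', Algebra.smul_def] at this
      exact this
    let h : p := s' • ⟨g, hg⟩ - ∑ i, b'' i • f i
    have hJ : J h = 0 := by
      simp only [h, map_sub, map_sum, map_smul, ← hb, Finset.smul_sum]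
      rw [sub_eq_zero]
      refine Finset.sum_congr rfl fun i _ => ?_
      rw [← algebraMap_smul κ s', ← algebraMap_smul κ (b'' i), hbs, mul_smul]
      rfl
    have hL (F : R) : aeval (fun i => algebraMap R L (X i)) F = algebraMap R L F :=
      (congrArg (· F) (aeval_unique (IsScalarTower.toAlgHom A R L))).symm
    have hLp (F : R) (hF : F ∈ p) : aeval (fun i => algebraMap R L (X i)) F ∈ m := by
      rw [hL, ← hmq]
      exact Ideal.mem_map_of_mem _ hF
    have hmem := h.1.aeval_mem_maximalIdeal_sq (fun i => algebraMap R L (X i)) (hLp _ h.2)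
      fun i => hLp _ (Ideal.algebraMap_residueField_eq_zero.mp (congrFun hJ i))
    rw [hL] at hmem
    have hsu : IsUnit (algebraMap R L s') := IsLocalization.map_units L (⟨s', hs'p⟩ : p.primeCompl)
    rw [Ideal.mem_comap, ← Ideal.unit_mul_mem_iff_mem _ hsu, ← map_mul]
    have hsg : s' * g = ∑ i, b'' i * (f i).1 + h.1 := by simp [h]
    rw [hsg, map_add]
    refine add_mem (Submodule.mem_sup_left (Ideal.mem_map_of_mem _ (sum_mem fun i _ =>
      Ideal.mul_mem_left _ _ (Ideal.subset_span ⟨i, rfl⟩)))) (Submodule.mem_sup_right ?_)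
    rwa [smul_eq_mul, ← sq]
  have hmle : m ≤ q := Submodule.le_of_le_smul_of_le_jacobson_bot (IsNoetherian.noetherian m)
    (IsLocalRing.maximalIdeal_le_jacobson _) hle
  have hex (g : R) (hg : g ∈ p) : ∃ N ∉ p, N * g ∈ Ideal.span (Set.range fun i => (f i).1) := by
    have : algebraMap R L g ∈ q := hmle (hmq ▸ Ideal.mem_map_of_mem _ hg)
    obtain ⟨N, hN, h⟩ :=
      (IsLocalization.algebraMap_mem_map_algebraMap_iff p.primeCompl L _ _).mp this
    exact ⟨N, hN, h⟩
  obtain ⟨t, ht⟩ := (isNoetherianRing_iff_ideal_fg R).mp inferInstance p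
  have htp (g : R) (hg : g ∈ t) : g ∈ p := ht ▸ Ideal.subset_span hg
  choose! N hN hNmem using hex
  refine ⟨r, fun i => (f i).1, c, ∏ g ∈ t, N g, fun i => (f i).2, ?_, fun g hg => ?_, ?_⟩
  · rw [Ideal.IsPrime.prod_mem_iff]
    rintro ⟨g, hg, h⟩
    exact hN g (htp g hg) h
  · have hle : p ≤ (Ideal.span (Set.range fun i => (f i).1)).colon {∏ g ∈ t, N g} := by
      refine ht.ge.trans (Ideal.span_le.mpr ?_)
      intro g hg
      rw [SetLike.mem_coe, Submodule.mem_colon_singleton, smul_eq_mul, mul_comm]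
      obtain ⟨z, hz⟩ := Finset.dvd_prod_of_mem N hg
      rw [hz, mul_right_comm]
      exact Ideal.mul_mem_right _ _ (hNmem g (htp g hg))
    have := hle hg
    rwa [Submodule.mem_colon_singleton, smul_eq_mul, mul_comm] at this
  · rw [← Ideal.algebraMap_residueField_eq_zero, RingHom.map_det]
    exact hc

/-- A square system defines a standard smooth algebra away from any multiple of its Jacobian. -/
lemma Algebra.isStandardSmooth_away_of_jacobian_dvd {D : Type*} [CommRing D] {r : ℕ}
    (g : Fin r → MvPolynomial (Fin r) D) (s : MvPolynomial (Fin r) D)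
    (hs : (Matrix.of fun i j => pderiv j (g i)).det ∣ s) :
    Algebra.IsStandardSmooth D
      (Localization.Away (Ideal.Quotient.mk (Ideal.span (Set.range g)) s)) := by
  let P := PreSubmersivePresentation.naive (R := D) (v := g) _root_.id Function.injective_id
  let Q := PreSubmersivePresentation.localizationAway
    (Localization.Away (Ideal.Quotient.mk (Ideal.span (Set.range g)) s))
    (Ideal.Quotient.mk (Ideal.span (Set.range g)) s)
  have hs' : IsUnit (algebraMap _
    (Localization.Away (Ideal.Quotient.mk (Ideal.span (Set.range g)) s))
    (Ideal.Quotient.mk (Ideal.span (Set.range g)) s)) := IsLocalization.Away.algebraMap_isUnit _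
  have hP : P.jacobian ∣ Ideal.Quotient.mk (Ideal.span (Set.range g)) s := by
    rw [P.jacobian_eq_jacobiMatrix_det]
    have : P.jacobiMatrix = (Matrix.of fun i j => pderiv j (g i))ᵀ := by
      ext1 i j
      exact PreSubmersivePresentation.jacobiMatrix_naive ..
    rw [this, Matrix.det_transpose]
    exact map_dvd (Ideal.Quotient.mk (Ideal.span (Set.range g))) hs
  let T : SubmersivePresentation D
      (Localization.Away (Ideal.Quotient.mk (Ideal.span (Set.range g)) s)) _ _ :=
    { Q.comp P with
      jacobian_isUnit := by
        rw [PreSubmersivePresentation.comp_jacobian_eq_jacobian_smul_jacobian,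
          PreSubmersivePresentation.localizationAway_jacobian, Algebra.smul_def]
        exact (isUnit_of_dvd_unit (map_dvd _ hP) hs').mul hs' }
  exact T.isStandardSmooth

lemma MvPolynomial.aeval_pderiv_eq_zero_of_mem_sq {σ D S : Type*} [CommRing D] [CommRing S]
    [Algebra D S] (ψ : MvPolynomial σ D →ₐ[D] S) (I : Ideal (MvPolynomial σ D))
    (hI : I ≤ RingHom.ker ψ) (Q : MvPolynomial σ D) (hQ : Q ∈ I ^ 2) (i : σ) :
    ψ (pderiv i Q) = 0 := by
  rw [sq] at hQ
  induction hQ using Submodule.mul_induction_on' with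
  | mem_mul_mem a ha b hb =>
    have ha : ψ a = 0 := hI ha
    have hb : ψ b = 0 := hI hb
    simp [Derivation.leibniz, ha, hb]
  | add a _ b _ ha hb => simp [ha, hb]

/-- A square system over `D` vanishing at a point `ψ` of `A'` at which its Jacobian and `s` are
invertible defines a standard smooth neighbourhood of `ψ` on which `s` is invertible. -/
lemma exists_isStandardSmooth_of_square_system {D A' : Type u} [CommRing D] [CommRing A']
    [Algebra D A'] {r : ℕ} (g : Fin r → MvPolynomial (Fin r) D) (s : MvPolynomial (Fin r) D)
    (ψ : MvPolynomial (Fin r) D →ₐ[D] A') (hg : ∀ i, ψ (g i) = 0)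
    (hdet : IsUnit (ψ (Matrix.of fun i j => pderiv j (g i)).det)) (hs : IsUnit (ψ s)) :
    ∃ (B' : Type u) (_ : CommRing B') (_ : Algebra D B'), Algebra.IsStandardSmooth D B' ∧
      ∃ (ρ : MvPolynomial (Fin r) D →ₐ[D] B') (γ : B' →ₐ[D] A'),
        (∀ i, ρ (g i) = 0) ∧ IsUnit (ρ s) ∧ γ.comp ρ = ψ := by
  set s₁ := (Matrix.of fun i j => pderiv j (g i)).det
  let J := Ideal.span (Set.range g)
  have hJ : ∀ x ∈ J, ψ x = 0 := by
    have : J ≤ RingHom.ker ψ := by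
      rw [Ideal.span_le]
      rintro _ ⟨i, rfl⟩
      exact hg i
    exact fun x hx => this hx
  let s₃ := Ideal.Quotient.mk J (s₁ * s)
  have hu : IsUnit (algebraMap _ (Localization.Away s₃) s₃) :=
    IsLocalization.Away.algebraMap_isUnit _
  let ψJ := Ideal.Quotient.liftₐ J ψ hJ
  have hψJ : IsUnit (ψJ s₃) := by
    change IsUnit (ψ (s₁ * s))
    rw [map_mul]
    exact hdet.mul hs
  let γ : Localization.Away s₃ →ₐ[D] A' :=
    IsLocalization.liftAlgHom (M := Submonoid.powers s₃) (f := ψJ) (by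
      rintro ⟨_, k, rfl⟩
      simpa using hψJ.pow k)
  refine ⟨Localization.Away s₃, inferInstance, inferInstance,
    Algebra.isStandardSmooth_away_of_jacobian_dvd g (s₁ * s) (Dvd.intro _ rfl),
    (IsScalarTower.toAlgHom D _ (Localization.Away s₃)).comp (Ideal.Quotient.mkₐ D J), γ,
    fun i => ?_, ?_, ?_⟩
  · have : Ideal.Quotient.mk J (g i) = 0 :=
      Ideal.Quotient.eq_zero_iff_mem.mpr (Ideal.subset_span ⟨i, rfl⟩)
    simp [this]
  · have h : IsUnit (algebraMap _ (Localization.Away s₃)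
        (Ideal.Quotient.mk J s₁ * Ideal.Quotient.mk J s)) := by
      rw [← map_mul]
      exact hu
    rw [map_mul] at h
    exact isUnit_of_mul_isUnit_right h
  · refine AlgHom.ext fun x => ?_
    simp only [γ, ψJ, AlgHom.comp_apply, IsScalarTower.coe_toAlgHom',
      IsLocalization.liftAlgHom_apply, IsLocalization.lift_eq]
    rfl

/-- A Newton-type lemma: an approximate solution `y` in a standard smooth `A`-algebra `D` of a
system with a sufficiently nondegenerate minor becomes an exact solution in a standard smooth
`D`-algebra, without changing its image in `A'`. -/
lemma exists_isStandardSmooth_of_approx {A A' D : Type u} [CommRing A] [IsDomain A] [CommRing A']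
    [CommRing D] [Algebra A A'] [Algebra A D] [Algebra D A'] [IsScalarTower A D A']
    [Algebra.IsStandardSmooth A D] {n r : ℕ} (f : Fin r → MvPolynomial (Fin n) A)
    (c : Fin r ↪ Fin n) (N : MvPolynomial (Fin n) A) (d : A) (hd : d ≠ 0)
    (y : Fin n → D) (z t : D) (b : Fin r → D)
    (hb : ∀ i, aeval y (f i) = algebraMap A D d ^ 2 * b i)
    (hbz : ∀ i, algebraMap D A' (b i) = 0)
    (ht : z * aeval y N * aeval y (Matrix.of fun i j => pderiv (c j) (f i)).det =
      algebraMap A D d * t)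
    (ht1 : algebraMap D A' t = 1) :
    ∃ (B' : Type u) (_ : CommRing B') (_ : Algebra A B'), Algebra.IsStandardSmooth A B' ∧
      ∃ (φ : MvPolynomial (Fin n) A →ₐ[A] B') (g : B' →ₐ[A] A'),
        (∀ F, N * F ∈ Ideal.span (Set.range f) → φ F = 0) ∧
        g.comp φ = aeval fun i => algebraMap D A' (y i) := by
  classical
  let M : Matrix (Fin r) (Fin r) D := Matrix.of fun i j => aeval y (pderiv (c j) (f i))
  have hM : aeval y (Matrix.of fun i j => pderiv (c j) (f i)).det = M.det := by
    rw [AlgHom.map_det]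
    rfl
  rw [hM] at ht
  let δ : MvPolynomial (Fin r) D := C (algebraMap A D d)
  let W : Fin r → MvPolynomial (Fin r) D := fun j =>
    C (z * aeval y N) * ∑ l, C (M.adjugate j l) * X l
  let V : Fin n → MvPolynomial (Fin r) D := fun k => ∑ j, if c j = k then W j else 0
  have hV (a : Fin n → MvPolynomial (Fin r) D) : ∑ k, a k * V k = ∑ j, a (c j) * W j := by
    simp only [V, Finset.mul_sum, mul_ite, mul_zero]
    rw [Finset.sum_comm]
    simp
  have hMW (i : Fin r) : ∑ j, C (M i j) * W j = δ * C t * X i := by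
    have h (l : Fin r) : ∑ j, M i j * M.adjugate j l = if i = l then M.det else 0 := by
      have := congrFun (congrFun M.mul_adjugate i) l
      simpa [Matrix.mul_apply, Matrix.one_apply] using this
    calc ∑ j, C (M i j) * W j
        = C (z * aeval y N) * ∑ l, C (∑ j, M i j * M.adjugate j l) * X l := by
          simp only [W, Finset.mul_sum, map_sum, Finset.sum_mul]
          rw [Finset.sum_comm]
          refine Finset.sum_congr rfl fun l _ => Finset.sum_congr rfl fun j _ => ?_
          simp only [map_mul]
          ring
      _ = δ * C t * X i := by
          simp only [h, δ, ← map_mul, ← ht]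
          simp [apply_ite C, ite_mul, mul_assoc]
  let I : Ideal (MvPolynomial (Fin r) D) := Ideal.span (Set.range X)
  have hVI : Ideal.span (Set.range V) ≤ I := by
    rw [Ideal.span_le]
    rintro _ ⟨k, rfl⟩
    refine sum_mem fun j _ => ?_
    split_ifs
    · exact Ideal.mul_mem_left _ _ (sum_mem fun l _ =>
        Ideal.mul_mem_left _ _ (Ideal.subset_span ⟨l, rfl⟩))
    · exact zero_mem _
  let ψ : MvPolynomial (Fin r) D →ₐ[D] A' := aeval 0
  have hIψ : I ≤ RingHom.ker ψ := by
    rw [Ideal.span_le]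
    rintro _ ⟨k, rfl⟩
    simp [RingHom.mem_ker, ψ]
  have hψ (q : MvPolynomial (Fin r) D) (hq : q ∈ I) : ψ q = 0 := hIψ hq
  let Y : Fin n → MvPolynomial (Fin r) D := fun k => C (y k) + δ * V k
  have haev (F : MvPolynomial (Fin n) A) :
      aeval (fun k => (C (y k) : MvPolynomial (Fin r) D)) F = C (aeval y F) :=
    (comp_aeval_apply y (IsScalarTower.toAlgHom A D (MvPolynomial (Fin r) D)) F).symm
  have taylor (F : MvPolynomial (Fin n) A) : ∃ Q ∈ I ^ 2, aeval Y F =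
      C (aeval y F) + δ * ∑ j, C (aeval y (pderiv (c j) F)) * W j + δ ^ 2 * Q := by
    obtain ⟨Q, hQ, h⟩ := F.exists_aeval_add_mul_eq
      (fun k => (C (y k) : MvPolynomial (Fin r) D)) V δ
    refine ⟨Q, Ideal.pow_right_mono hVI 2 hQ, ?_⟩
    rw [hV] at h
    simpa only [haev] using h
  choose Q hQ hQeq using fun i => taylor (f i)
  have hQI (i) : Q i ∈ I := Ideal.pow_le_self two_ne_zero (hQ i)
  let g : Fin r → MvPolynomial (Fin r) D := fun i => C (b i) + C t * X i + Q i
  have hfg (i : Fin r) : aeval Y (f i) = δ ^ 2 * g i := by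
    have : ∑ j, C (aeval y (pderiv (c j) (f i))) * W j = δ * C t * X i := hMW i
    rw [hQeq, hb, this]
    simp only [g, δ, map_mul, map_pow]
    ring
  obtain ⟨QN, hQN, hN⟩ := taylor N
  let ν : MvPolynomial (Fin r) D := ∑ j, C (aeval y (pderiv (c j) N)) * W j + δ * QN
  have hν : ψ ν = 0 := by
    refine hψ _ (add_mem (sum_mem fun j _ => Ideal.mul_mem_left _ _ ?_)
      (Ideal.mul_mem_left _ _ (Ideal.pow_le_self two_ne_zero hQN)))
    exact Ideal.mul_mem_left _ _ (sum_mem fun l _ =>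
        Ideal.mul_mem_left _ _ (Ideal.subset_span ⟨l, rfl⟩))
  let s₂ : MvPolynomial (Fin r) D := C t + C (z * M.det) * ν
  have hs₂ : C (z * M.det) * aeval Y N = δ * s₂ := by
    have h1 : (C (z * M.det) * C (aeval y N) : MvPolynomial (Fin r) D) = δ * C t := by
      simp only [δ, ← map_mul, ← ht]
      congr 1
      ring
    rw [hN]
    linear_combination h1
  let s₁ : MvPolynomial (Fin r) D := (Matrix.of fun i j => pderiv j (g i)).det
  have hψ₁ : ψ s₁ = 1 := by
    have : (Matrix.of fun i j => pderiv j (g i)).map ψ = 1 := by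
      ext i j
      have := aeval_pderiv_eq_zero_of_mem_sq ψ I hIψ (Q i) (hQ i) j
      have hC : ψ (C t) = 1 := (ψ.commutes t).trans ht1
      obtain rfl | hij := eq_or_ne i j
      · simp [g, this, Derivation.leibniz, hC]
      · simp [g, this, Derivation.leibniz, hij]
    rw [AlgHom.map_det, AlgHom.mapMatrix_apply, this, Matrix.det_one]
  have hψ₂ : ψ s₂ = 1 := by
    simp only [s₂, map_add, map_mul, hν, mul_zero, add_zero]
    simp [ψ, ht1]
  have hψg (i) : ψ (g i) = 0 := by
    simp only [g, map_add, hψ _ (hQI i), map_mul]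
    simp [ψ, hbz]
  obtain ⟨B', _, _, hsm, ρ, γ, hρg, hρs, hγ⟩ :=
    exists_isStandardSmooth_of_square_system g s₂ ψ hψg
    (by rw [hψ₁]; exact isUnit_one) (by rw [hψ₂]; exact isUnit_one)
  let : Algebra A B' := ((algebraMap D B').comp (algebraMap A D)).toAlgebra
  have : IsScalarTower A D B' := .of_algebraMap_eq' rfl
  have hsmA : Algebra.IsStandardSmooth A B' := .trans A D B'
  refine ⟨B', inferInstance, inferInstance, hsmA, (ρ.restrictScalars A).comp (aeval Y),
    γ.restrictScalars A, ?_, ?_⟩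
  · intro F hF
    have h1 : ρ (aeval Y (N * F)) = 0 := by
      have hle : Ideal.span (Set.range f) ≤ RingHom.ker ((ρ.restrictScalars A).comp (aeval Y)) := by
        rw [Ideal.span_le]
        rintro _ ⟨i, rfl⟩
        simp [RingHom.mem_ker, hfg, hρg]
      exact hle hF
    have h2 : d • (ρ s₂ * ρ (aeval Y F)) = 0 := by
      have hδ : algebraMap A B' d = ρ δ := ((ρ.restrictScalars A).commutes d).symm
      rw [Algebra.smul_def, hδ, ← map_mul, ← map_mul, ← mul_assoc, ← hs₂, mul_assoc, ← map_mul,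
        map_mul ρ, h1, mul_zero]
    have h3 : ρ s₂ * ρ (aeval Y F) = 0 :=
      (Module.Flat.isSMulRegular_of_isRegular (M := B')
        (IsRegular.of_ne_zero hd)).right_eq_zero_of_smul h2
    exact (hρs.mul_right_eq_zero).mp h3
  · refine algHom_ext fun k => ?_
    have hVk : ψ (V k) = 0 := hψ _ (hVI (Ideal.subset_span ⟨k, rfl⟩))
    have hYk : ψ (Y k) = algebraMap D A' (y k) := by
      simp only [Y, map_add, map_mul, hVk, mul_zero, add_zero]
      simp [ψ]
    simpa [← hYk] using AlgHom.congr_fun hγ (Y k)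

/-- A standard smooth algebra in the sense of submersive presentations is standard smooth in the
sense of `IsStandardSmoothP`. -/
lemma IsStandardSmoothP.of_isStandardSmooth (A B : Type u) [CommRing A] [CommRing B] [Algebra A B]
    [h : Algebra.IsStandardSmooth A B] : IsStandardSmoothP A B := by
  obtain ⟨ι, σ, _, _, ⟨P₀⟩⟩ := h.out
  obtain ⟨n, ⟨e⟩⟩ := Finite.exists_equiv_fin ι
  obtain ⟨r, ⟨e'⟩⟩ := Finite.exists_equiv_fin σ
  let P := P₀.reindex e.symm e'.symm
  let c : Fin r ↪ Fin n := ⟨P.map, P.map_inj⟩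
  have hsurj : Function.Surjective (aeval P.val : MvPolynomial (Fin n) A →ₐ[A] B) :=
    P.aeval_val_surjective
  have hker : Ideal.span (Set.range P.relation) =
      RingHom.ker (aeval P.val : MvPolynomial (Fin n) A →ₐ[A] B) :=
    P.span_range_relation_eq_ker.trans P.ker_eq_ker_aeval_val
  let ε := Ideal.quotientKerAlgEquivOfSurjective hsurj
  refine ⟨n, r, by simpa using Fintype.card_le_of_embedding c, _, ε, P.relation,
    fun i => hker ▸ Ideal.subset_span ⟨i, rfl⟩, ?_⟩
  have hdet : IsUnit (aeval P.val
      (Matrix.of fun i j : Fin r => pderiv (c j) (P.relation i)).det) := by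
    have hP := P.jacobian_isUnit
    rw [P.jacobian_eq_jacobiMatrix_det, ← Matrix.det_transpose] at hP
    have hM : P.jacobiMatrixᵀ = Matrix.of fun i j : Fin r => pderiv (c j) (P.relation i) := by
      ext1 i j
      exact P.jacobiMatrix_apply j i
    rwa [hM, P.algebraMap_apply] at hP
  have hcolon : (Ideal.span (Set.range P.relation)).colon
      (RingHom.ker (aeval P.val : MvPolynomial (Fin n) A →ₐ[A] B)) = ⊤ := by
    rw [hker]
    exact (Submodule.colon_eq_top_iff_subset _).mpr le_rfl
  rw [hcolon, Ideal.top_mul]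
  have hmem := Ideal.mem_map_of_mem (Ideal.Quotient.mk (RingHom.ker (aeval (R := A) P.val)))
    (Ideal.subset_span (s := {d : MvPolynomial (Fin n) A | ∃ c : Fin r ↪ Fin n,
      d = (Matrix.of fun i j : Fin r => pderiv (c j) (P.relation i)).det}) ⟨c, rfl⟩)
  rw [Ideal.eq_top_of_isUnit_mem _ hmem ((isUnit_map_iff ε _).mp hdet)]
  trivial

lemma MvPolynomial.isStandardSmooth (D : Type*) [CommRing D] (n : ℕ) :
    Algebra.IsStandardSmooth D (MvPolynomial (Fin n) D) := by
  let P : Algebra.SubmersivePresentation D (MvPolynomial (Fin n) D) (Fin n) (Fin 0) :=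
    { val := X
      σ' := _root_.id
      aeval_val_σ' := by simp
      relation := Fin.elim0
      span_range_relation_eq_ker := by
        rw [Set.range_eq_empty, Ideal.span_empty, Algebra.Generators.ker_eq_ker_aeval_val, eq_comm,
          ← RingHom.injective_iff_ker_eq_bot]
        simpa using Function.injective_id
      map := Fin.elim0
      map_inj := fun i => i.elim0
      jacobian_isUnit := by
        rw [Algebra.PreSubmersivePresentation.jacobian_eq_jacobiMatrix_det]
        simp }
  exact P.isStandardSmooth

lemma IsLocalRing.exists_maximalIdeal_pow_le_span (R : Type*) [CommRing R] [IsDomain R]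
    [IsNoetherianRing R] [IsLocalRing R] (hR : ringKrullDim R = 1) (x : R) (hx : x ≠ 0) :
    ∃ s : ℕ, IsLocalRing.maximalIdeal R ^ s ≤ Ideal.span {x} := by
  have : Ring.KrullDimLE 1 R := (Order.krullDimLE_iff _ _).mpr hR.le
  refine Ideal.exists_pow_le_of_le_radical_of_fg ?_ (IsNoetherian.noetherian _)
  rw [Ideal.radical_eq_sInf]
  refine le_sInf fun p ⟨hxp, hp⟩ => ?_
  have hp0 : p ≠ ⊥ := by
    rintro rfl
    exact hx (by simpa using hxp)
  exact (IsLocalRing.eq_maximalIdeal (hp.isMaximal_of_ne_bot hp0)).ge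

/-- In characteristic zero, every finite subset of a field extension lies in a standard smooth
subalgebra. -/
lemma Algebra.exists_isStandardSmooth_of_finite {k K : Type u} [Field k] [CharZero k] [Field K]
    [Algebra k K] (T : Set K) (hT : T.Finite) :
    ∃ (E : Type u) (_ : CommRing E) (_ : Algebra k E), Algebra.IsStandardSmooth k E ∧
      ∃ j : E →ₐ[k] K, Function.Injective j ∧ T ⊆ Set.range j := by
  let C := Algebra.adjoin k T
  have : Algebra.FiniteType k C := C.fg_iff_finiteType.mp (Subalgebra.fg_def.mpr ⟨T, hT, rfl⟩)
  have : Algebra.FinitePresentation k C := Algebra.FinitePresentation.of_finiteType.mp this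
  let p : Ideal C := ⊥
  have hC : IsField (Localization.AtPrime p) := by
    have : IsFractionRing C (Localization.AtPrime p) := by
      have h : p.primeCompl = nonZeroDivisors C := by
        ext x
        simp [p, Ideal.primeCompl]
      change IsLocalization _ _
      rw [← h]
      infer_instance
    exact IsFractionRing.toField C |>.toIsField
  let := hC.toField
  have : Algebra.EssFiniteType k (Localization.AtPrime p) := .comp k C _
  have : Algebra.IsSmoothAt k p := Algebra.FormallySmooth.of_perfectField
  obtain ⟨c, hc, hsm⟩ := Algebra.IsSmoothAt.exists_notMem_isStandardSmooth k p
  have hunit (z : Submonoid.powers c) : IsUnit (C.val z) := by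
    obtain ⟨_, m, rfl⟩ := z
    have : (c : K) ≠ 0 := fun h => hc (Subtype.ext h)
    simpa using this.isUnit.pow m
  let j : Localization.Away c →ₐ[k] K :=
    IsLocalization.liftAlgHom (M := Submonoid.powers c) (f := C.val) hunit
  refine ⟨Localization.Away c, inferInstance, inferInstance, hsm, j, ?_, ?_⟩
  · exact (IsLocalization.lift_injective_iff hunit).mpr fun x y =>
      ⟨fun h => congrArg _ (IsLocalization.injective _ (powers_le_nonZeroDivisors_of_noZeroDivisors
        fun h => hc h) h), fun h => congrArg _ (Subtype.ext h)⟩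
  · intro x hx
    exact ⟨algebraMap C _ ⟨x, Algebra.subset_adjoin hx⟩, by simp [j]⟩

open TensorProduct in
/-- Let `R → S` be a faithfully flat algebra over a local ring containing a field of
representatives `k`. A family in a field `K` mapping to `S` which is linearly independent over `k`
is linearly independent over `R` in `S`. -/
lemma LinearIndependent.map_of_faithfullyFlat {k K R S ι : Type u} [Field k] [Field K]
    [Algebra k K] [CommRing R] [IsLocalRing R] [CommRing S] [Algebra R S]
    [Module.FaithfullyFlat R S] (σ : k →+* R) (j : K →+* S)
    (hσ : ∀ x, ∃ c, x - σ c ∈ IsLocalRing.maximalIdeal R)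
    (hc : ∀ c, algebraMap R S (σ c) = j (algebraMap k K c)) {e : ι → K}
    (he : LinearIndependent k e) : LinearIndependent R (j ∘ e) := by
  refine Module.IsLocalRing.linearIndependent_of_flat _ ?_
  rw [linearIndependent_iff']
  intro s a ha i hi
  have hres (x : IsLocalRing.ResidueField R) : ∃ c, IsLocalRing.residue R (σ c) = x := by
    obtain ⟨y, rfl⟩ := IsLocalRing.residue_surjective x
    obtain ⟨c, hc⟩ := hσ y
    refine ⟨c, ?_⟩
    rw [eq_comm, ← sub_eq_zero, ← map_sub]
    exact (IsLocalRing.residue_eq_zero_iff _).mpr hc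
  choose c hc' using fun i => hres (a i)
  let ι₀ : K →+* (IsLocalRing.ResidueField R) ⊗[R] S :=
    (Algebra.TensorProduct.includeRight.toRingHom).comp j
  have h0 : ι₀ (∑ i ∈ s, c i • e i) = 0 := by
    rw [← ha, map_sum]
    refine Finset.sum_congr rfl fun i _ => ?_
    have h : ι₀ (c i • e i) = 1 ⊗ₜ (σ (c i) • j (e i)) := by
      rw [Algebra.smul_def (σ (c i)), hc, ← map_mul, ← Algebra.smul_def]
      rfl
    rw [h, ← hc' i, ← TensorProduct.smul_tmul, Function.comp_apply, Function.comp_apply,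
      TensorProduct.mk_apply, TensorProduct.smul_tmul', Algebra.smul_def, smul_eq_mul]
    rfl
  have h1 : ∑ i ∈ s, c i • e i = 0 := ι₀.injective (h0.trans (map_zero _).symm)
  rw [← hc' i, linearIndependent_iff'.mp he s c h1 i hi, map_zero, map_zero]

open TensorProduct in
/-- Let `A → A'` be a faithfully flat algebra over a local ring with a field of
representatives `k`, and `E` a `k`-subalgebra of a field `K` mapping compatibly to `A'`. Then
ideals of `A` extended to `A ⊗ E` are contracted from `A'`. -/
lemma Algebra.TensorProduct.mem_map_of_faithfullyFlat {k K A A' E : Type u} [Field k] [Field K]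
    [Algebra k K] [CommRing A] [IsLocalRing A] [CommRing A'] [Algebra A A']
    [Module.FaithfullyFlat A A'] [Algebra k A] [Algebra k A'] [IsScalarTower k A A']
    [CommRing E] [Algebra k E] (σ' : K →ₐ[k] A') (j : E →ₐ[k] K) (hj : Function.Injective j)
    (hσ : ∀ x, ∃ c, x - algebraMap k A c ∈ IsLocalRing.maximalIdeal A) (J : Ideal A)
    (hJ : J ≠ ⊤) (x : A ⊗[k] E)
    (hx : Algebra.TensorProduct.lift (Algebra.ofId A A') (σ'.comp j) (fun _ _ => .all _ _) x ∈
      J.map (algebraMap A A')) :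
    x ∈ J.map (algebraMap A (A ⊗[k] E)) := by
  let b := Module.Basis.ofVectorSpace k E
  let b' := b.baseChange A
  have : Nontrivial (A ⧸ J) := Ideal.Quotient.nontrivial_iff.mpr hJ
  have : IsLocalRing (A ⧸ J) := .of_surjective' _ Ideal.Quotient.mk_surjective
  let i₂ : A' →ₐ[A] (A ⧸ J) ⊗[A] A' := Algebra.TensorProduct.includeRight
  have hli : LinearIndependent (A ⧸ J) ((i₂.toRingHom.comp σ'.toRingHom) ∘ (j ∘ b)) := by
    refine LinearIndependent.map_of_faithfullyFlat (k := k)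
      ((Ideal.Quotient.mk J).comp (algebraMap k A)) _ ?_ ?_
      (b.linearIndependent.map' j.toLinearMap (LinearMap.ker_eq_bot.mpr hj))
    · intro y
      obtain ⟨y, rfl⟩ := Ideal.Quotient.mk_surjective y
      obtain ⟨c, hc⟩ := hσ y
      refine ⟨c, ?_⟩
      have hm := Ideal.comap_isMaximal_of_surjective (Ideal.Quotient.mk J)
        Ideal.Quotient.mk_surjective (K := IsLocalRing.maximalIdeal (A ⧸ J))
      rw [RingHom.comp_apply, ← map_sub, ← Ideal.mem_comap, IsLocalRing.eq_maximalIdeal hm]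
      exact hc
    · intro c
      change algebraMap A _ (algebraMap k A c) = i₂ (σ' (algebraMap k K c))
      rw [σ'.commutes, IsScalarTower.algebraMap_apply k A A', i₂.commutes]
  have hxr : ∀ i, b'.repr x i ∈ J := by
    intro i
    have h0 : ∑ i ∈ (b'.repr x).support, Ideal.Quotient.mk J (b'.repr x i) •
        ((i₂.toRingHom.comp σ'.toRingHom) ∘ (j ∘ b)) i = 0 := by
      have hi₂ : J.map (algebraMap A A') ≤ RingHom.ker i₂ := by
        rw [Ideal.map_le_iff_le_comap]
        intro a ha
        rw [Ideal.mem_comap, RingHom.mem_ker, i₂.commutes,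
          IsScalarTower.algebraMap_apply A (A ⧸ J), Ideal.Quotient.algebraMap_eq,
          Ideal.Quotient.eq_zero_iff_mem.mpr ha, map_zero]
      rw [← (hi₂ hx : i₂ _ = 0)]
      conv_rhs => rw [← b'.linearCombination_repr x, Finsupp.linearCombination_apply, Finsupp.sum]
      simp only [map_sum, map_smul]
      refine Finset.sum_congr rfl fun i _ => ?_
      rw [← Ideal.Quotient.algebraMap_eq, algebraMap_smul]
      simp [b']
    by_cases hi : i ∈ (b'.repr x).support
    · exact Ideal.Quotient.eq_zero_iff_mem.mp (linearIndependent_iff'.mp hli _ _ h0 i hi)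
    · simp [Finsupp.notMem_support_iff.mp hi]
  rw [← b'.linearCombination_repr x, Finsupp.linearCombination_apply]
  refine sum_mem fun i _ => ?_
  simp only [Algebra.smul_def]
  exact Ideal.mul_mem_right _ _ (Ideal.mem_map_of_mem _ (hxr i))

lemma Submodule.sup_pow_smul_top_eq_top {R M : Type*} [CommRing R] [AddCommGroup M] [Module R M]
    (I : Ideal R) (W : Submodule R M) (h : W ⊔ I • ⊤ = ⊤) (s : ℕ) :
    W ⊔ I ^ s • (⊤ : Submodule R M) = ⊤ := by
  induction s with
  | zero => simp
  | succ s ih =>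
    refine top_le_iff.mp ?_
    calc ⊤ = W ⊔ I ^ s • (W ⊔ I • ⊤) := by rw [h, ih]
      _ ≤ W ⊔ I ^ (s + 1) • ⊤ := by
        rw [Submodule.smul_sup, ← Submodule.mul_smul, ← pow_succ, ← sup_assoc]
        exact sup_le_sup_right (sup_le le_rfl Submodule.smul_le_right) _

open TensorProduct in
/-- Approximation of points of `A'` by standard smooth algebras modulo a principal ideal. -/
lemma exists_isStandardSmooth_mem_span {k K A A' : Type u} [Field k] [CharZero k] [Field K]
    [Algebra k K] [CommRing A] [IsLocalRing A] [CommRing A'] [Algebra A A']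
    [Module.FaithfullyFlat A A'] [Algebra k A] [Algebra k A'] [IsScalarTower k A A']
    (σ' : K →ₐ[k] A')
    (hσ : ∀ x, ∃ c, x - algebraMap k A c ∈ IsLocalRing.maximalIdeal A)
    (hσ' : ∀ x, ∃ c, x - σ' c ∈ (IsLocalRing.maximalIdeal A).map (algebraMap A A'))
    (δ : A) (hδ : δ ∈ IsLocalRing.maximalIdeal A) (s : ℕ)
    (hs : IsLocalRing.maximalIdeal A ^ s ≤ Ideal.span {δ}) {n : ℕ} (y : Fin n → A') :
    ∃ (D : Type u) (_ : CommRing D) (_ : Algebra A D), Algebra.IsStandardSmooth A D ∧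
      ∃ (w : D →ₐ[A] A') (Y : Fin n → D), (∀ i, w (Y i) = y i) ∧
        ∀ F : MvPolynomial (Fin n) A, aeval y F = 0 → algebraMap A D δ ∣ aeval Y F := by
  let W : Submodule A A' := Submodule.span A (Set.range σ')
  have hW : W ⊔ Ideal.span {δ} • ⊤ = ⊤ := by
    have h1 : W ⊔ IsLocalRing.maximalIdeal A • ⊤ = ⊤ := by
      refine (Submodule.eq_top_iff'.mpr fun x => ?_)
      obtain ⟨c, hc⟩ := hσ' x
      rw [← add_sub_cancel (σ' c) x, Ideal.smul_top_eq_map]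
      exact Submodule.add_mem_sup (Submodule.subset_span ⟨c, rfl⟩) hc
    exact eq_top_iff.mpr ((Submodule.sup_pow_smul_top_eq_top _ W h1 s).ge.trans
      (sup_le_sup_left (Submodule.smul_mono_left hs) _))
  have hy (i : Fin n) : ∃ T : Set K, T.Finite ∧ ∃ a ∈ Submodule.span A (Set.image σ' T), ∃ t : A',
      y i = a + algebraMap A A' δ * t := by
    have hyi : y i ∈ W ⊔ Ideal.span {δ} • ⊤ := hW.ge Submodule.mem_top
    obtain ⟨a, ha, t, ht, hat⟩ := Submodule.mem_sup.mp hyi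
    obtain ⟨c, rfl⟩ := Finsupp.mem_span_range_iff_exists_finsupp.mp ha
    rw [Submodule.ideal_span_singleton_smul] at ht
    obtain ⟨t, -, rfl⟩ := (Submodule.mem_smul_pointwise_iff_exists _ _ _).mp ht
    refine ⟨c.support, c.support.finite_toSet, c.sum fun x a => a • σ' x,
      sum_mem fun x hx => ?_, t, ?_⟩
    · exact Submodule.smul_mem _ _ (Submodule.subset_span ⟨x, hx, rfl⟩)
    · rw [← hat, Algebra.smul_def]
  choose T hT a ha t hat using hy
  obtain ⟨E, _, _, hE, j, hj, hTj⟩ := Algebra.exists_isStandardSmooth_of_finite (k := k)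
    (⋃ i, T i) (Set.finite_iUnion hT)
  let w₀ : A ⊗[k] E →ₐ[A] A' :=
    Algebra.TensorProduct.lift (Algebra.ofId A A') (σ'.comp j) (fun _ _ => .all _ _)
  have haw (i : Fin n) : ∃ α, w₀ α = a i := by
    have : Submodule.span A (Set.image σ' (T i)) ≤ LinearMap.range w₀.toLinearMap := by
      rw [Submodule.span_le]
      rintro _ ⟨x, hx, rfl⟩
      obtain ⟨e, rfl⟩ := hTj (Set.mem_iUnion_of_mem i hx)
      exact ⟨1 ⊗ₜ e, by simp [w₀]⟩
    exact this (ha i)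
  choose α hα using haw
  let w : MvPolynomial (Fin n) (A ⊗[k] E) →ₐ[A] A' := aevalTower w₀ t
  have := MvPolynomial.isStandardSmooth (A ⊗[k] E) n
  refine ⟨MvPolynomial (Fin n) (A ⊗[k] E), inferInstance, inferInstance,
    .trans A (A ⊗[k] E) _, w, fun i => C (α i) + algebraMap A _ δ * X i,
    fun i => ?_, fun F hF => ?_⟩
  · have hwδ : w (algebraMap A _ δ) = algebraMap A A' δ := w.commutes δ
    rw [map_add, map_mul, hwδ]
    simp [w, hα, hat]
  · obtain ⟨Q, -, hQ⟩ := F.exists_aeval_add_mul_eq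
      (fun i => (C (α i) : MvPolynomial (Fin n) (A ⊗[k] E))) X (algebraMap A _ δ)
    rw [hQ, sq, mul_assoc, add_assoc, ← mul_add]
    refine dvd_add ?_ (Dvd.intro _ rfl)
    have hJ : Ideal.span {δ} ≠ ⊤ := fun h =>
      hδ (Ideal.span_singleton_eq_top.mp h)
    have hmem : w₀ (aeval α F) ∈ (Ideal.span {δ}).map (algebraMap A A') := by
      obtain ⟨q, -, hq⟩ := F.exists_aeval_add_mul_eq a t (algebraMap A A' δ)
      simp only [← hat] at hq
      have hw₀ : w₀ (aeval α F) = aeval a F := by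
        rw [comp_aeval_apply]
        simp only [hα]
      rw [Ideal.map_span, Set.image_singleton, Ideal.mem_span_singleton, hw₀]
      refine ⟨-(∑ i, aeval a (pderiv i F) * t i + algebraMap A A' δ * q), ?_⟩
      linear_combination hq.symm.trans hF
    have hdvd := Algebra.TensorProduct.mem_map_of_faithfullyFlat σ' j hj hσ _ hJ _ hmem
    rw [Ideal.map_span, Set.image_singleton, Ideal.mem_span_singleton] at hdvd
    have haev : aeval (fun i => (C (α i) : MvPolynomial (Fin n) (A ⊗[k] E))) F = C (aeval α F) :=
      (comp_aeval_apply α (IsScalarTower.toAlgHom A (A ⊗[k] E) _) F).symm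
    rw [haev]
    exact map_dvd C hdvd

/-- Factorization through standard smooth algebras for one-dimensional Noetherian local domains
with compatible fields of representatives `k` and `K` of characteristic zero. -/
theorem exists_isStandardSmooth_factorization {k K A A' B : Type u} [Field k] [CharZero k]
    [Field K] [Algebra k K] [CommRing A] [IsDomain A] [IsNoetherianRing A] [IsLocalRing A]
    [CommRing A'] [IsDomain A'] [IsNoetherianRing A'] [IsLocalRing A'] [Algebra A A']
    [IsLocalHom (algebraMap A A')] [Module.Flat A A'] [Algebra k A] [Algebra k A']
    [IsScalarTower k A A'] (hdim : ringKrullDim A = 1) (hdim' : ringKrullDim A' = 1)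
    (σ' : K →ₐ[k] A') (hσ : ∀ x, ∃ c, x - algebraMap k A c ∈ IsLocalRing.maximalIdeal A)
    (hσ' : ∀ x, ∃ c, x - σ' c ∈ (IsLocalRing.maximalIdeal A).map (algebraMap A A'))
    [CommRing B] [Algebra A B] [Algebra.FiniteType A B] (v : B →ₐ[A] A') :
    ∃ (B' : Type u) (_ : CommRing B') (_ : Algebra A B'), Algebra.IsStandardSmooth A B' ∧
      ∃ (f : B →ₐ[A] B') (g : B' →ₐ[A] A'), g.comp f = v := by
  have : Module.FaithfullyFlat A A' := .of_flat_of_isLocalHom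
  have hinj : Function.Injective (algebraMap A A') := FaithfulSMul.algebraMap_injective A A'
  have : CharZero A := charZero_of_injective_algebraMap (algebraMap k A).injective
  obtain ⟨n, q, hq⟩ := Algebra.FiniteType.iff_quotient_mvPolynomial''.mp ‹Algebra.FiniteType A B›
  let y : Fin n → A' := fun i => v (q (X i))
  have hvq : v.comp q = aeval y := aeval_unique _
  let p := RingHom.ker (aeval (R := A) y)
  have hp : p.comap C = ⊥ := by
    refine eq_bot_iff.mpr fun a ha => ?_
    have : algebraMap A A' a = 0 := by simpa [p, RingHom.mem_ker] using ha
    exact hinj (this.trans (map_zero _).symm)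
  have : p.IsPrime := RingHom.ker_isPrime _
  obtain ⟨r, f, c, N, hfp, hNp, hN, hdet⟩ := exists_jacobian_minor p hp
  set Δ := (Matrix.of fun i j => pderiv (c j) (f i)).det
  have hP : aeval y (N * Δ) ≠ 0 := fun h => (Ideal.IsPrime.mem_or_mem ‹_› h).elim hNp hdet
  obtain ⟨s, hs⟩ := IsLocalRing.exists_maximalIdeal_pow_le_span A' hdim' _ hP
  have hm : IsLocalRing.maximalIdeal A ≠ ⊥ := by
    intro h
    have := ringKrullDim_eq_zero_of_isField (IsLocalRing.isField_iff_maximalIdeal_eq.mpr h)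
    simp [hdim] at this
  obtain ⟨x, hx, hx0⟩ := Submodule.exists_mem_ne_zero_of_ne_bot hm
  let d := x ^ (s + 1)
  have hd0 : d ≠ 0 := pow_ne_zero _ hx0
  have hd : d ∈ IsLocalRing.maximalIdeal A := Ideal.pow_mem_of_mem _ hx _ s.succ_pos
  have hd0' : algebraMap A A' d ≠ 0 := fun h => hd0 (hinj (h.trans (map_zero _).symm))
  obtain ⟨z, hz⟩ : aeval y (N * Δ) ∣ algebraMap A A' d := by
    rw [← Ideal.mem_span_singleton, map_pow]
    refine hs (Ideal.pow_le_pow_right s.le_succ (Ideal.pow_mem_pow ?_ _))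
    exact map_nonunit (algebraMap A A') x hx
  obtain ⟨s', hs'⟩ := IsLocalRing.exists_maximalIdeal_pow_le_span A hdim _ (pow_ne_zero 2 hd0)
  obtain ⟨D, _, _, hD, w, Y, hY, hYdvd⟩ := exists_isStandardSmooth_mem_span σ' hσ hσ' (d ^ 2)
    (Ideal.pow_mem_of_mem _ hd 2 two_pos) s' hs' (Fin.cons z y : Fin (n + 1) → A')
  let Y' : Fin n → D := Y ∘ Fin.succ
  have hY0 : w (Y 0) = z := hY 0
  have hY' (i : Fin n) : w (Y' i) = y i := hY i.succ
  have hwY (F : MvPolynomial (Fin n) A) : w (aeval Y' F) = aeval y F := by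
    rw [comp_aeval_apply]
    simp only [hY']
  let : Algebra D A' := w.toRingHom.toAlgebra
  have : IsScalarTower A D A' := .of_algebraMap_eq fun a => (w.commutes a).symm
  have hb (i : Fin r) : ∃ b, aeval Y' (f i) = algebraMap A D d ^ 2 * b := by
    have hfi : aeval y (f i) = 0 := hfp i
    have := hYdvd (rename Fin.succ (f i)) (by rwa [aeval_rename, Fin.cons_comp_succ])
    rwa [aeval_rename, map_pow] at this
  choose b hb using hb
  have hbz (i : Fin r) : w (b i) = 0 := by
    have h : algebraMap A A' d ^ 2 * w (b i) = 0 := by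
      rw [← w.commutes, ← map_pow, ← map_mul, ← hb, hwY]
      exact hfp i
    exact (mul_eq_zero.mp h).resolve_left (pow_ne_zero 2 hd0')
  obtain ⟨e, he⟩ : algebraMap A D d ^ 2 ∣ Y 0 * aeval Y' (N * Δ) - algebraMap A D d := by
    have := hYdvd (X 0 * rename Fin.succ (N * Δ) - C d) (by
      rw [map_sub, map_mul, aeval_rename, Fin.cons_comp_succ, aeval_X, Fin.cons_zero,
        algHom_C, hz, mul_comm, sub_self])
    rwa [map_sub, map_mul, aeval_rename, map_pow, aeval_X, algHom_C] at this
  have ht : Y 0 * aeval Y' N * aeval Y' Δ = algebraMap A D d * (1 + algebraMap A D d * e) := by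
    rw [mul_assoc, ← map_mul]
    linear_combination he
  have ht1 : w (1 + algebraMap A D d * e) = 1 := by
    have h := congrArg w ht
    rw [mul_assoc, ← map_mul, map_mul w, map_mul w, hwY, hY0, w.commutes, mul_comm z, ← hz] at h
    exact mul_left_cancel₀ hd0' (h.symm.trans (mul_one _).symm)
  obtain ⟨B', _, _, hB', φ, g, hφ, hgφ⟩ :=
    exists_isStandardSmooth_of_approx f c N d hd0 Y' (Y 0) _ b hb hbz ht ht1
  have hker (F : MvPolynomial (Fin n) A) (hF : q F = 0) : φ F = 0 := by
    refine hφ F (hN F ?_)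
    change aeval y F = 0
    rw [← hvq, AlgHom.comp_apply, hF, map_zero]
  let ε := Ideal.quotientKerAlgEquivOfSurjective hq
  refine ⟨B', inferInstance, inferInstance, hB',
    (Ideal.Quotient.liftₐ (RingHom.ker q) φ hker).comp ε.symm.toAlgHom, g, ?_⟩
  refine AlgHom.ext fun x => ?_
  obtain ⟨F, rfl⟩ := hq x
  have hε : ε.symm (q F) = Ideal.Quotient.mk _ F := ε.symm_apply_eq.mpr rfl
  have hgF := AlgHom.congr_fun hgφ F
  have hvF := AlgHom.congr_fun hvq F
  have hlift : Ideal.Quotient.liftₐ (RingHom.ker q) φ hker (ε.symm (q F)) = φ F := by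
    rw [hε]
    rfl
  change g (Ideal.Quotient.liftₐ (RingHom.ker q) φ hker (ε.symm (q F))) = v (q F)
  rw [hlift]
  refine hgF.trans (Eq.trans ?_ hvF.symm)
  exact congrArg (aeval (R := A) · F) (funext hY')

theorem stmt1 (A A' : Type u) [CommRing A] [CommRing A']
    [IsDomain A] [IsDomain A'] [IsNoetherianRing A] [IsNoetherianRing A']
    [IsLocalRing A] [IsLocalRing A']
    (hdimA : ringKrullDim A = 1) (hdimA' : ringKrullDim A' = 1)
    [Algebra A A'] [IsLocalHom (algebraMap A A')] (hflat : Module.Flat A A')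
    (hmax : (IsLocalRing.maximalIdeal A).map (algebraMap A A')
      = IsLocalRing.maximalIdeal A')
    [Algebra ℚ A]
    (hsec : ∃ (σ : (A ⧸ IsLocalRing.maximalIdeal A) →+* A)
        (σ' : (A' ⧸ IsLocalRing.maximalIdeal A') →+* A'),
      (Ideal.Quotient.mk (IsLocalRing.maximalIdeal A)).comp σ = RingHom.id _ ∧
      (Ideal.Quotient.mk (IsLocalRing.maximalIdeal A')).comp σ' = RingHom.id _ ∧
      ∀ x, algebraMap A A' (σ x) ∈ σ'.range)
    (B : Type u) [CommRing B] [Algebra A B] [Algebra.FiniteType A B]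
    (v : B →ₐ[A] A') :
    ∃ (B' : Type u) (_ : CommRing B') (_ : Algebra A B'), IsStandardSmoothP A B' ∧
      ∃ (f : B →ₐ[A] B') (g : B' →ₐ[A] A'), g.comp f = v := by
  obtain ⟨σ, σ', hσ, hσ', hrange⟩ := hsec
  let k := IsLocalRing.ResidueField A
  let K := IsLocalRing.ResidueField A'
  have hσ (c : k) : IsLocalRing.residue A (σ c) = c := RingHom.congr_fun hσ c
  have hσ' (c : K) : IsLocalRing.residue A' (σ' c) = c := RingHom.congr_fun hσ' c
  have hcompat (c : k) : σ' (algebraMap k K c) = algebraMap A A' (σ c) := by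
    obtain ⟨b, hb⟩ := hrange c
    have h : IsLocalRing.residue A' (algebraMap A A' (σ c)) = algebraMap k K c :=
      congrArg (algebraMap k K) (hσ c)
    rw [← h, ← hb]
    exact congrArg σ' (hσ' b)
  let : Algebra k A := RingHom.toAlgebra (R := k) σ
  let : Algebra k A' := ((algebraMap A A').comp (algebraMap k A)).toAlgebra
  have : IsScalarTower k A A' := .of_algebraMap_eq fun _ => rfl
  have : CharZero k := algebraRat.charZero k
  obtain ⟨B', _, _, hB', h⟩ := exists_isStandardSmooth_factorization (k := k) (K := K)
    hdimA hdimA' { (σ' : K →+* A') with commutes' := hcompat }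
    (fun x => ⟨IsLocalRing.residue A x, by
      rw [← IsLocalRing.residue_eq_zero_iff, map_sub, sub_eq_zero]
      exact (hσ _).symm⟩)
    (fun x => ⟨IsLocalRing.residue A' x, by
      rw [hmax, ← IsLocalRing.residue_eq_zero_iff, map_sub, sub_eq_zero]
      exact (hσ' _).symm⟩) v
  exact ⟨B', inferInstance, inferInstance, .of_isStandardSmooth A B', h⟩
end

section
/- Let u : A → A' be a flat local homomorphism of Noetherian local domains of Krull dimension one, with maximal ideals m ⊆ A and m' ⊆ A', such that mA' = m'. Assume ℚ ⊆ A, and that there exist ring homomorphisms k → A and k' → A' splitting the quotient maps A → k := A/m and A' → k' := A'/mA' respectively, with u(k) ⊆ k'. Let B be a finite type A-algebra, v : B → A' an A-algebra homomorphism, and d a nonzero element of m. Then there exists a smooth A-algebra D such that the induced A/d³A-algebra homomorphism v̄ : B/d³B → A'/d³A' factors through (A/d³A) ⊗_A D, i.e. v̄ is a composite B/d³B → (A/d³A) ⊗_A D → A'/d³A'. -/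
universe u

open TensorProduct

/-- Over a perfect field, every finitely generated subalgebra of a field extension is contained in a
smooth algebra which embeds into the extension. -/
theorem Subalgebra.FG.exists_smooth_le_range {k K : Type u} [Field k] [PerfectField k] [Field K]
    [Algebra k K] {S : Subalgebra k K} (hS : S.FG) :
    ∃ (C : Type u) (_ : CommRing C) (_ : Algebra k C) (_ : Algebra.Smooth k C) (φ : C →ₐ[k] K),
      Function.Injective φ ∧ S ≤ φ.range := by
  have : Algebra.FiniteType k S := S.fg_iff_finiteType.mp hS
  have : Algebra.FinitePresentation k S := Algebra.FinitePresentation.of_finiteType.mp this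
  have : Algebra.IsSmoothAt k (⊥ : Ideal S) := by
    have : Algebra.FormallySmooth k (FractionRing S) := by
      have : Algebra.EssFiniteType S (FractionRing S) := .of_isLocalization _ (nonZeroDivisors S)
      have : Algebra.EssFiniteType k (FractionRing S) := .comp k S _
      infer_instance
    have : IsLocalization (⊥ : Ideal S).primeCompl (FractionRing S) := by
      rw [Ideal.primeCompl_bot]
      infer_instance
    exact .of_equiv ((IsLocalization.algEquiv (⊥ : Ideal S).primeCompl (FractionRing S)
      (Localization.AtPrime (⊥ : Ideal S))).restrictScalars k)
  obtain ⟨f, hf, hs⟩ := Algebra.IsSmoothAt.exists_notMem_smooth k (⊥ : Ideal S)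
  have hf0 : f ≠ 0 := hf
  have hunit : ∀ y : Submonoid.powers f, IsUnit (S.val y) := by
    rintro ⟨_, n, rfl⟩
    simpa using fun h ↦ absurd h hf0
  refine ⟨Localization.Away f, inferInstance, inferInstance, hs,
    IsLocalization.liftAlgHom (M := Submonoid.powers f) (f := S.val) hunit, ?_, ?_⟩
  · refine (IsLocalization.lift_injective_iff _).mpr fun x y ↦ ?_
    rw [(IsLocalization.injective (Localization.Away f)
      (powers_le_nonZeroDivisors_of_noZeroDivisors hf0)).eq_iff]
    exact Subtype.val_injective.eq_iff.symm
  · intro x hx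
    exact ⟨algebraMap S _ ⟨x, hx⟩, by simp⟩

/-- If `R'` is flat over the local ring `R` with coefficient field `k`, and `k'` is an extension of
`k` mapping to `R'`, then `R ⊗[k] k' → R'` is injective. -/
theorem tensorProduct_lift_injective_of_flat {R R' k k' : Type u}
    [CommRing R] [CommRing R'] [Field k] [Field k']
    [IsLocalRing R] [Algebra R R'] [Module.Flat R R']
    [Algebra k k'] [Algebra k R] [Algebra k R'] [Algebra k' R'] [IsScalarTower k R R']
    [IsScalarTower k k' R']
    [Nontrivial (IsLocalRing.ResidueField R ⊗[R] R')]
    (hk : Function.Surjective (algebraMap k (IsLocalRing.ResidueField R))) :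
    Function.Injective (Algebra.TensorProduct.lift (Algebra.ofId R R')
      (IsScalarTower.toAlgHom k k' R') fun _ _ ↦ Commute.all _ _) := by
  let b := Module.Free.chooseBasis k k'
  have hli : LinearIndependent R (fun i ↦ algebraMap k' R' (b i)) := by
    apply Module.IsLocalRing.linearIndependent_of_flat
    let ψ : k' →ₐ[k] IsLocalRing.ResidueField R ⊗[R] R' :=
      ((Algebra.TensorProduct.includeRight (R := R) (A := IsLocalRing.ResidueField R)
        (B := R')).restrictScalars k).comp (IsScalarTower.toAlgHom k k' R')
    have h := b.linearIndependent.map' ψ.toLinearMap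
      (LinearMap.ker_eq_bot.mpr ψ.toRingHom.injective)
    rw [linearIndependent_iff'] at h ⊢
    intro s g hg i hi
    choose c hc using hk
    have := h s (fun i ↦ c (g i)) (by
      rw [← hg]
      refine Finset.sum_congr rfl fun j _ ↦ ?_
      rw [← hc (g j), algebraMap_smul, hc]
      rfl) i hi
    rw [← hc (g i), this, map_zero]
  let b' := Algebra.TensorProduct.basis R b
  rw [injective_iff_map_eq_zero]
  intro x hx
  have hl : LinearIndependent R (fun i ↦ Algebra.TensorProduct.lift (Algebra.ofId R R')
      (IsScalarTower.toAlgHom k k' R') (fun _ _ ↦ Commute.all _ _) (b' i)) := by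
    convert hli using 2 with i
    simp [b']
  rw [← b'.linearCombination_repr x] at hx ⊢
  rw [Finsupp.linearCombination_apply, map_finsuppSum] at hx
  have := linearIndependent_iff.mp hl (b'.repr x)
    (by simpa [Finsupp.linearCombination_apply] using hx)
  simp [this]

/-- If `k'` surjects onto `R' ⧸ I R'` for a nilpotent ideal `I` of `R`, then `R ⊗[k] k' → R'` is
surjective. -/
theorem tensorProduct_lift_surjective_of_isNilpotent {R R' k k' : Type u}
    [CommRing R] [CommRing R'] [Field k] [Field k']
    [Algebra R R']
    [Algebra k k'] [Algebra k R] [Algebra k R'] [Algebra k' R'] [IsScalarTower k R R']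
    [IsScalarTower k k' R']
    {I : Ideal R} (hI : IsNilpotent I)
    (h : ∀ x : R', ∃ c : k', x - algebraMap k' R' c ∈ I.map (algebraMap R R')) :
    Function.Surjective (Algebra.TensorProduct.lift (Algebra.ofId R R')
      (IsScalarTower.toAlgHom k k' R') fun _ _ ↦ Commute.all _ _) := by
  obtain ⟨n, hn⟩ := hI
  let f := Algebra.TensorProduct.lift (Algebra.ofId R R')
      (IsScalarTower.toAlgHom k k' R') fun _ _ ↦ Commute.all _ _
  let N : Submodule R R' := LinearMap.range f.toLinearMap
  have key : ∀ m : ℕ, N ⊔ I ^ m • (⊤ : Submodule R R') = ⊤ := by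
    intro m
    induction m with
    | zero => rw [pow_zero, Ideal.one_eq_top, Submodule.top_smul, sup_top_eq]
    | succ m ih =>
      have h1 : N ⊔ I • (⊤ : Submodule R R') = ⊤ := by
        rw [eq_top_iff]
        intro x _
        obtain ⟨c, hc⟩ := h x
        rw [← sub_add_cancel x (algebraMap k' R' c), add_comm]
        refine Submodule.add_mem_sup ⟨1 ⊗ₜ c, by simp [f]⟩ ?_
        rw [Ideal.smul_top_eq_map]
        exact hc
      rw [eq_top_iff]
      calc ⊤ = N ⊔ I ^ m • (N ⊔ I • (⊤ : Submodule R R')) := by rw [h1, ih]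
        _ = (N ⊔ I ^ m • N) ⊔ I ^ (m + 1) • ⊤ := by
          rw [Submodule.smul_sup, ← Submodule.mul_smul, ← pow_succ, sup_assoc]
        _ ≤ _ := by
          gcongr
          exact sup_le le_rfl Submodule.smul_le_right
  have := key n
  rw [hn] at this
  simp only [Submodule.zero_eq_bot, Submodule.bot_smul, bot_le, sup_of_le_left] at this
  intro x
  have hx : x ∈ N := this ▸ Submodule.mem_top
  exact hx

/-- A homomorphism from a finite type algebra to `R ⊗[k] k'`, with `k'` an extension of a perfect
field `k`, factors through `R ⊗[k] C` for some smooth `k`-algebra `C`. -/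
theorem exists_smooth_factorization_tensorProduct {A B R k k' : Type u}
    [CommRing A] [CommRing B] [CommRing R]
    [Field k] [Field k'] [PerfectField k] [Algebra A B] [Algebra.FiniteType A B]
    [Algebra A R] [Algebra k A] [Algebra k R]
    [IsScalarTower k A R] [Algebra k k'] (w : B →ₐ[A] R ⊗[k] k') :
    ∃ (C : Type u) (_ : CommRing C) (_ : Algebra k C) (_ : Algebra.Smooth k C) (φ : C →ₐ[k] k')
      (g : B →ₐ[A] R ⊗[k] C), ∀ b, Algebra.TensorProduct.map (AlgHom.id R R) φ (g b) = w b := by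
  obtain ⟨s, hs⟩ := Algebra.FiniteType.out (R := A) (A := B)
  obtain ⟨N, hN, hle⟩ := TensorProduct.exists_finite_submodule_right_of_setFinite
    (R := k) (w '' (s : Set B)) (s.finite_toSet.image _)
  obtain ⟨t, ht⟩ := Module.Finite.iff_fg.mp hN
  obtain ⟨C, _, _, hC, φ, hφ, hle'⟩ := Subalgebra.FG.exists_smooth_le_range
    (S := Algebra.adjoin k (t : Set k')) ⟨t, rfl⟩
  let F : R ⊗[k] C →ₐ[A] R ⊗[k] k' :=
    (Algebra.TensorProduct.map (AlgHom.id R R) φ).restrictScalars A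
  have hF : Function.Injective F :=
    Module.Flat.lTensor_preserves_injective_linearMap (M := R) φ.toLinearMap hφ
  have hw : ∀ b, w b ∈ F.range := by
    suffices h : (⊤ : Subalgebra A B).map w ≤ F.range from fun b ↦ h ⟨b, trivial, rfl⟩
    rw [← hs, AlgHom.map_adjoin, Algebra.adjoin_le_iff]
    intro y hy
    obtain ⟨z, rfl⟩ := hle hy
    clear hy
    induction z with
    | zero => rw [map_zero]; exact zero_mem F.range
    | add x y hx hy => rw [map_add]; exact add_mem hx hy
    | tmul r n =>
      have hn : (n : k') ∈ φ.range := hle' (Algebra.span_le_adjoin k _ (ht ▸ n.2))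
      obtain ⟨c, hc⟩ := hn
      exact ⟨r ⊗ₜ c, by simpa [F] using congrArg (r ⊗ₜ[k] ·) hc⟩
  let e := AlgEquiv.ofInjective F hF
  refine ⟨C, inferInstance, inferInstance, hC, φ,
    (e.symm : F.range →ₐ[A] _).comp (w.codRestrict F.range hw), fun b ↦ ?_⟩
  exact congr_arg Subtype.val (e.apply_symm_apply ⟨w b, hw b⟩)

/-- Reduction modulo a nonzero element `d` of a one-dimensional local domain `A`: if `A → A'` is
flat, unramified and compatible with coefficient fields, then every homomorphism from a finite type
`A`-algebra to `A'` factors modulo `d` through a smooth `A`-algebra. -/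
theorem exists_smooth_factorization_quotient {A A' k k' : Type u} [CommRing A] [CommRing A']
    [IsDomain A] [IsNoetherianRing A] [IsLocalRing A] [IsLocalRing A']
    (hdimA : Ring.KrullDimLE 1 A)
    [Algebra A A'] [IsLocalHom (algebraMap A A')] [Module.Flat A A']
    (hmax : (IsLocalRing.maximalIdeal A).map (algebraMap A A')
      = IsLocalRing.maximalIdeal A')
    [Field k] [PerfectField k] [Field k'] (σ : k →+* A) (σ' : k' →+* A')
    (hσσ' : ∀ x, algebraMap A A' (σ x) ∈ σ'.range)
    (hk : ∀ a : A, ∃ c : k, a - σ c ∈ IsLocalRing.maximalIdeal A)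
    (hk' : ∀ a : A', ∃ c : k', a - σ' c ∈ IsLocalRing.maximalIdeal A')
    {B : Type u} [CommRing B] [Algebra A B] [Algebra.FiniteType A B]
    (v : B →ₐ[A] A')
    {d : A} (hd : d ∈ IsLocalRing.maximalIdeal A) (hd0 : d ≠ 0) :
    ∃ (D : Type u) (_ : CommRing D) (_ : Algebra A D), Algebra.Smooth A D ∧
      ∃ (g : B →ₐ[A] ((A ⧸ Ideal.span {d}) ⊗[A] D))
        (h : ((A ⧸ Ideal.span {d}) ⊗[A] D) →ₐ[A]
          (A ⧸ Ideal.span {d}) ⊗[A] A'),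
        ∀ b : B, h (g b) = 1 ⊗ₜ v b := by
  let : Algebra k A := σ.toAlgebra
  let : Algebra k' A' := σ'.toAlgebra
  let : Algebra k A' := ((algebraMap A A').comp σ).toAlgebra
  let ε := RingEquiv.ofBijective σ'.rangeRestrict
    ⟨fun _ _ h ↦ σ'.injective (congrArg Subtype.val h), σ'.rangeRestrict_surjective⟩
  let : Algebra k k' :=
    (ε.symm.toRingHom.comp (((algebraMap A A').comp σ).codRestrict σ'.range hσσ')).toAlgebra
  have : IsScalarTower k A A' := .of_algebraMap_eq fun _ ↦ rfl
  have : IsScalarTower k k' A' := .of_algebraMap_eq fun x ↦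
    (congrArg Subtype.val (ε.apply_symm_apply ⟨algebraMap A A' (σ x), hσσ' x⟩)).symm
  let R := A ⧸ Ideal.span {d}
  have hne : Ideal.span {d} ≠ ⊤ := fun h ↦
    hd (Ideal.span_singleton_eq_top.mp h)
  have : Nontrivial R := Ideal.Quotient.nontrivial_iff.mpr hne
  have hsurj : Function.Surjective (algebraMap A R) := Ideal.Quotient.mk_surjective
  have : IsLocalRing R := .of_surjective' (algebraMap A R) hsurj
  have : IsLocalHom (algebraMap A R) := .of_surjective _ hsurj
  have : Module.FaithfullyFlat A A' := .of_flat_of_isLocalHom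
  let : Algebra k' (R ⊗[A] A') :=
    ((Algebra.TensorProduct.includeRight : A' →ₐ[A] R ⊗[A] A').toRingHom.comp
      (algebraMap k' A')).toAlgebra
  have halg (c : k') : algebraMap k' (R ⊗[A] A') c = 1 ⊗ₜ algebraMap k' A' c := rfl
  have : IsScalarTower k k' (R ⊗[A] A') := .of_algebraMap_eq fun c ↦ by
    rw [halg, ← IsScalarTower.algebraMap_apply, IsScalarTower.algebraMap_apply k A A',
      Algebra.TensorProduct.algebraMap_apply, IsScalarTower.algebraMap_apply k A R]
    exact ((Algebra.TensorProduct.includeRight : A' →ₐ[A] R ⊗[A] A').commutes _).symm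
  have hI : IsNilpotent ((IsLocalRing.maximalIdeal A).map (algebraMap A R)) := by
    have : IsLocalRing.maximalIdeal A ≤ (Ideal.span {d}).radical := by
      rw [Ideal.radical_eq_sInf]
      refine le_sInf fun p ⟨hp, hp'⟩ ↦ ?_
      have : p ≠ ⊥ := by
        rintro rfl
        exact hd0 (by simpa using hp)
      have : p.IsMaximal :=
        Ring.krullDimLE_one_iff_of_noZeroDivisors.mp hdimA p this hp'
      exact (IsLocalRing.eq_maximalIdeal this).ge
    obtain ⟨n, hn⟩ := Ideal.exists_pow_le_of_le_radical_of_fg this (IsNoetherian.noetherian _)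
    refine ⟨n, ?_⟩
    rw [← Ideal.map_pow, Ideal.zero_eq_bot, Ideal.map_eq_bot_iff_le_ker]
    simpa [R] using hn
  let f := Algebra.TensorProduct.lift (Algebra.ofId R (R ⊗[A] A'))
      (IsScalarTower.toAlgHom k k' (R ⊗[A] A')) fun _ _ ↦ Commute.all _ _
  have hf : Function.Bijective f := by
    refine ⟨tensorProduct_lift_injective_of_flat ?_,
      tensorProduct_lift_surjective_of_isNilpotent hI ?_⟩
    · intro x
      obtain ⟨x, rfl⟩ := IsLocalRing.residue_surjective x
      obtain ⟨a, rfl⟩ := hsurj x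
      obtain ⟨c, hc⟩ := hk a
      refine ⟨c, ?_⟩
      rw [IsScalarTower.algebraMap_apply k R, IsScalarTower.algebraMap_apply k A R, eq_comm,
        IsLocalRing.ResidueField.algebraMap_eq, ← sub_eq_zero, ← map_sub, ← map_sub,
        IsLocalRing.residue_eq_zero_iff]
      exact map_nonunit (algebraMap A R) _ hc
    · intro x
      obtain ⟨a, rfl⟩ := TensorProduct.mk_surjective A A' R hsurj x
      obtain ⟨c, hc⟩ := hk' a
      refine ⟨c, ?_⟩
      have h := Ideal.mem_map_of_mem
        (Algebra.TensorProduct.includeRight : A' →ₐ[A] R ⊗[A] A').toRingHom hc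
      rw [← hmax, Ideal.map_map] at h
      rw [halg, Ideal.map_map, TensorProduct.mk_apply, ← TensorProduct.tmul_sub,
        ← IsScalarTower.algebraMap_eq]
      exact (Algebra.TensorProduct.includeRight : A' →ₐ[A] R ⊗[A] A').comp_algebraMap ▸ h
  let e := (AlgEquiv.ofBijective f hf).restrictScalars A
  obtain ⟨C, _, _, _, φ, g, hg⟩ := exists_smooth_factorization_tensorProduct
    ((e.symm : R ⊗[A] A' →ₐ[A] R ⊗[k] k').comp (Algebra.TensorProduct.includeRight.comp v))
  let c := (Algebra.TensorProduct.cancelBaseChange k A A R C)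
  refine ⟨A ⊗[k] C, inferInstance, inferInstance, inferInstance,
    (c.symm : R ⊗[k] C →ₐ[A] _).comp g,
    ((e : _ →ₐ[A] R ⊗[A] A').comp
      ((Algebra.TensorProduct.map (AlgHom.id R R) φ).restrictScalars A)).comp
        (c : _ →ₐ[A] R ⊗[k] C), fun b ↦ ?_⟩
  simp [hg]

theorem stmt2 (A A' : Type u) [CommRing A] [CommRing A']
    [IsDomain A] [IsDomain A'] [IsNoetherianRing A] [IsNoetherianRing A']
    [IsLocalRing A] [IsLocalRing A']
    (hdimA : ringKrullDim A = 1) (hdimA' : ringKrullDim A' = 1)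
    [Algebra A A'] [IsLocalHom (algebraMap A A')] (hflat : Module.Flat A A')
    (hmax : (IsLocalRing.maximalIdeal A).map (algebraMap A A')
      = IsLocalRing.maximalIdeal A')
    [Algebra ℚ A]
    (hsec : ∃ (σ : (A ⧸ IsLocalRing.maximalIdeal A) →+* A)
        (σ' : (A' ⧸ IsLocalRing.maximalIdeal A') →+* A'),
      (Ideal.Quotient.mk (IsLocalRing.maximalIdeal A)).comp σ = RingHom.id _ ∧
      (Ideal.Quotient.mk (IsLocalRing.maximalIdeal A')).comp σ' = RingHom.id _ ∧
      ∀ x, algebraMap A A' (σ x) ∈ σ'.range)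
    (B : Type u) [CommRing B] [Algebra A B] [Algebra.FiniteType A B]
    (v : B →ₐ[A] A')
    (d : A) (hd : d ∈ IsLocalRing.maximalIdeal A) (hd0 : d ≠ 0) :
    ∃ (D : Type u) (_ : CommRing D) (_ : Algebra A D), Algebra.Smooth A D ∧
      ∃ (g : B →ₐ[A] ((A ⧸ Ideal.span {d ^ 3}) ⊗[A] D))
        (h : ((A ⧸ Ideal.span {d ^ 3}) ⊗[A] D) →ₐ[A]
          (A' ⧸ Ideal.span {(algebraMap A A' d) ^ 3})),
        ∀ b : B, h (g b) = Ideal.Quotient.mk (Ideal.span {(algebraMap A A' d) ^ 3}) (v b) := by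
  obtain ⟨σ, σ', hσ, hσ', hr⟩ := hsec
  let := Ideal.Quotient.field (IsLocalRing.maximalIdeal A)
  let := Ideal.Quotient.field (IsLocalRing.maximalIdeal A')
  have : CharZero (A ⧸ IsLocalRing.maximalIdeal A) :=
    algebraRat.charZero _
  have hdim : Ring.KrullDimLE 1 A := (Order.krullDimLE_iff _ _).mpr hdimA.le
  obtain ⟨D, _, _, hD, g, h, hgh⟩ := exists_smooth_factorization_quotient hdim hmax σ σ' hr
    (fun a ↦ ⟨Ideal.Quotient.mk _ a, Ideal.Quotient.eq.mp (RingHom.congr_fun hσ _).symm⟩)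
    (fun a ↦ ⟨Ideal.Quotient.mk _ a, Ideal.Quotient.eq.mp (RingHom.congr_fun hσ' _).symm⟩)
    v (d := d ^ 3) (Ideal.pow_mem_of_mem _ hd 3 (by simp)) (pow_ne_zero 3 hd0)
  have hq : ∀ a ∈ Ideal.span {d ^ 3},
      Algebra.ofId A (A' ⧸ Ideal.span {(algebraMap A A' d) ^ 3}) a = 0 := fun a ha ↦ by
    obtain ⟨c, rfl⟩ := Ideal.mem_span_singleton.mp ha
    refine Ideal.Quotient.eq_zero_iff_mem.mpr (Ideal.mem_span_singleton.mpr ?_)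
    exact ⟨algebraMap A A' c, by simp⟩
  let q : (A ⧸ Ideal.span {d ^ 3}) ⊗[A] A' →ₐ[A] A' ⧸ Ideal.span {(algebraMap A A' d) ^ 3} :=
    Algebra.TensorProduct.lift
      (Ideal.Quotient.liftₐ _ (Algebra.ofId A (A' ⧸ Ideal.span {(algebraMap A A' d) ^ 3})) hq)
      (Ideal.Quotient.mkₐ A _) fun _ _ ↦ Commute.all _ _
  exact ⟨D, inferInstance, inferInstance, hD, g, q.comp h, fun b ↦ by simp [hgh, q]⟩
end

section
/- Let A be a Noetherian ring, A' an A-algebra which is an integral domain, Y = (Y₁,…,Yₙ) variables, I an ideal of A[Y], and v : B = A[Y]/I → A' an A-algebra homomorphism given by Y ↦ y ∈ A'ⁿ. Let f = (f₁,…,f_r) be polynomials in I with r ≤ n, M an r×r minor of the Jacobian matrix (∂f_i/∂Y_j) (say on a set C of r columns), N ∈ ((f):I), and set P' = MN. Suppose there are z ∈ A' and a nonzero d' ∈ A whose image in A' equals P'(y)·z. Let Z be a new variable, f_{r+1} = −d' + P'·Z ∈ A[Y,Z], I₁ = I·A[Y,Z] + (f_{r+1}), and B₁ = A[Y,Z]/I₁.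 Then: (i) the A-algebra map v₁ : B₁ → A' given by Y ↦ y, Z ↦ z is well defined and extends v; (ii) the (r+1)×(r+1) minor M₁ of the Jacobian matrix of (f₁,…,f_{r+1}) with respect to (Y,Z) on the columns C together with the Z-column equals M·P'; (iii) N₁ := N·Z² lies in ((f₁,…,f_{r+1}) : I₁); and (iv) d'² − M₁N₁ ∈ I₁. -/
universe u

open MvPolynomial

/-- The derivative with respect to a variable outside the range of a renaming vanishes. -/
theorem MvPolynomial.pderiv_rename_eq_zero {R σ τ : Type*} [CommSemiring R] {e : σ → τ} {t : τ}
    (ht : ∀ i, e i ≠ t) (p : MvPolynomial σ R) :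
    pderiv t (rename e p) = 0 := by
  induction p using MvPolynomial.induction_on with
  | C a => simp
  | add p q hp hq => simp [hp, hq]
  | mul_X p j hp => simp [hp, pderiv_X_of_ne (ht j)]

/-- A matrix whose last column vanishes above its last entry has determinant the product of that
entry and the complementary principal minor. -/
theorem Matrix.det_of_last_column_eq_zero {R : Type*} [CommRing R] {r : ℕ}
    (T : Matrix (Fin (r + 1)) (Fin (r + 1)) R)
    (hT : ∀ i : Fin r, T i.castSucc (Fin.last r) = 0) :
    T.det = (T.submatrix Fin.castSucc Fin.castSucc).det * T (Fin.last r) (Fin.last r) := by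
  rw [Matrix.det_succ_column T (Fin.last r), Fin.sum_univ_castSucc]
  simp [hT, Fin.succAbove_last, mul_comm]

theorem stmt6 (A A' : Type u) [CommRing A] [IsNoetherianRing A]
    [CommRing A'] [IsDomain A'] [Algebra A A']
    (n r : ℕ) (hrn : r ≤ n)
    (I : Ideal (MvPolynomial (Fin n) A))
    (f : Fin r → MvPolynomial (Fin n) A) (hf : ∀ i, f i ∈ I)
    (col : Fin r ↪ Fin n)
    (M : MvPolynomial (Fin n) A)
    (hM : M = (Matrix.of fun i j : Fin r => pderiv (col j) (f i)).det)
    (N : MvPolynomial (Fin n) A) (hN : N ∈ (Ideal.span (Set.range f)).colon I)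
    (P' : MvPolynomial (Fin n) A) (hP' : P' = M * N)
    (y : Fin n → A') (hy : ∀ g ∈ I, aeval y g = 0)
    (z : A') (d' : A) (hd'0 : d' ≠ 0)
    (hd' : algebraMap A A' d' = aeval y P' * z)
    (fr1 : MvPolynomial (Fin (n + 1)) A)
    (hfr1 : fr1 = - C d' + rename Fin.castSucc P' * X (Fin.last n))
    (I₁ : Ideal (MvPolynomial (Fin (n + 1)) A))
    (hI₁ : I₁ = Ideal.map
        (rename Fin.castSucc : MvPolynomial (Fin n) A →ₐ[A] MvPolynomial (Fin (n + 1)) A) I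
      ⊔ Ideal.span {fr1})
    (f₁ : Fin (r + 1) → MvPolynomial (Fin (n + 1)) A)
    (hf₁ : f₁ = Fin.snoc (fun i => rename Fin.castSucc (f i)) fr1)
    (col₁ : Fin (r + 1) → Fin (n + 1))
    (hcol₁ : col₁ = Fin.snoc (fun j => Fin.castSucc (col j)) (Fin.last n))
    (M₁ : MvPolynomial (Fin (n + 1)) A)
    (hM₁ : M₁ = (Matrix.of fun i j : Fin (r + 1) => pderiv (col₁ j) (f₁ i)).det)
    (N₁ : MvPolynomial (Fin (n + 1)) A)
    (hN₁ : N₁ = rename Fin.castSucc N * X (Fin.last n) ^ 2)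
    (y₁ : Fin (n + 1) → A') (hy₁ : y₁ = Fin.snoc y z) :
    -- (i) `v₁ : B₁ → A'`, `Y ↦ y`, `Z ↦ z` is well defined and extends `v`
    (∀ g ∈ I₁, aeval y₁ g = 0) ∧
    (∀ p : MvPolynomial (Fin n) A, aeval y₁ (rename Fin.castSucc p) = aeval y p) ∧
    -- (ii) the `(r+1) × (r+1)` minor on the columns `col` together with the `Z`-column
    M₁ = rename Fin.castSucc M * rename Fin.castSucc P' ∧
    -- (iii)
    N₁ ∈ (Ideal.span (Set.range f₁)).colon I₁ ∧
    -- (iv)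
    C (d' ^ 2) - M₁ * N₁ ∈ I₁ := by
  subst hM₁ hN₁ hy₁ hcol₁ hf₁ hI₁
  have hext (p : MvPolynomial (Fin n) A) :
      aeval (Fin.snoc y z : Fin (n + 1) → A') (rename Fin.castSucc p) = aeval y p := by
    rw [aeval_rename]
    congr 2
    ext i
    simp
  have hminor : (Matrix.of fun i j : Fin (r + 1) =>
      pderiv ((Fin.snoc (fun j => Fin.castSucc (col j)) (Fin.last n) : Fin (r + 1) → Fin (n + 1)) j)
        ((Fin.snoc (fun i => rename Fin.castSucc (f i)) fr1 :
          Fin (r + 1) → MvPolynomial (Fin (n + 1)) A) i)).det =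
      rename Fin.castSucc M * rename Fin.castSucc P' := by
    have hlast (p : MvPolynomial (Fin n) A) : pderiv (Fin.last n) (rename Fin.castSucc p) = 0 :=
      pderiv_rename_eq_zero (fun i => Fin.castSucc_ne_last i) p
    rw [Matrix.det_of_last_column_eq_zero _ fun i => by simp [hlast], hM, AlgHom.map_det]
    congr 1
    · congr 1
      ext1 i j
      simp [pderiv_rename (Fin.castSucc_injective n)]
    · simp [hfr1, hlast]
  have hfr1_mem : fr1 ∈ Ideal.map
      (rename Fin.castSucc : MvPolynomial (Fin n) A →ₐ[A] MvPolynomial (Fin (n + 1)) A) I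
      ⊔ Ideal.span {fr1} :=
    Ideal.mem_sup_right (Ideal.mem_span_singleton_self fr1)
  refine ⟨?_, hext, hminor, ?_, ?_⟩
  · suffices h : Ideal.map
        (rename Fin.castSucc : MvPolynomial (Fin n) A →ₐ[A] MvPolynomial (Fin (n + 1)) A) I
        ⊔ Ideal.span {fr1} ≤
        RingHom.ker (aeval (R := A) (Fin.snoc y z : Fin (n + 1) → A')) from
      fun g hg => h hg
    refine sup_le (Ideal.map_le_iff_le_comap.2 fun g hg => ?_) ?_
    · rw [Ideal.mem_comap, RingHom.mem_ker, hext, hy g hg]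
    · rw [Ideal.span_singleton_le_iff_mem, RingHom.mem_ker, hfr1]
      simp only [map_add, map_neg, map_mul, hext, aeval_C, aeval_X, Fin.snoc_last, hd']
      ring
  · set J := Ideal.span (Set.range (Fin.snoc (fun i => rename Fin.castSucc (f i)) fr1 :
      Fin (r + 1) → MvPolynomial (Fin (n + 1)) A))
    have hfJ : Ideal.span (Set.range f) ≤ J.comap
        (rename Fin.castSucc : MvPolynomial (Fin n) A →ₐ[A] MvPolynomial (Fin (n + 1)) A) := by
      rw [Ideal.span_le]
      rintro _ ⟨i, rfl⟩
      exact Ideal.subset_span ⟨i.castSucc, by simp⟩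
    rw [Submodule.mem_colon]
    suffices h : Ideal.map
        (rename Fin.castSucc : MvPolynomial (Fin n) A →ₐ[A] MvPolynomial (Fin (n + 1)) A) I
        ⊔ Ideal.span {fr1} ≤
        J.colon {rename Fin.castSucc N * X (Fin.last n) ^ 2} from fun g hg => by
      simpa [Submodule.mem_colon_singleton, mul_comm] using h hg
    refine sup_le (Ideal.map_le_iff_le_comap.2 fun g hg => ?_) ?_
    · have hNg := hfJ (Submodule.mem_colon.1 hN g hg)
      rw [Ideal.mem_comap, smul_eq_mul, map_mul] at hNg
      rw [Ideal.mem_comap, Submodule.mem_colon_singleton, smul_eq_mul, ← mul_assoc,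
        mul_comm (rename _ g)]
      exact J.mul_mem_right _ hNg
    · rw [Ideal.span_singleton_le_iff_mem, Submodule.mem_colon_singleton, smul_eq_mul]
      exact J.mul_mem_right _ (Ideal.subset_span ⟨Fin.last r, by simp⟩)
  · have hfactor : C (d' ^ 2) - rename Fin.castSucc M * rename Fin.castSucc P' *
        (rename Fin.castSucc N * X (Fin.last n) ^ 2) =
        -(C d' + rename Fin.castSucc P' * X (Fin.last n)) * fr1 := by
      rw [hfr1, hP', map_pow, map_mul]
      ring
    rw [hminor, hfactor]
    exact Ideal.mul_mem_left _ _ hfr1_mem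
end

section
/- Let u : A → A' be a flat local homomorphism of Noetherian local domains of Krull dimension one, with maximal ideals m ⊆ A and m' ⊆ A', such that mA' = m'. Assume ℚ ⊆ A. Then u is a regular morphism: u is flat, and for every prime ideal P of A and every finite field extension K of the fraction field of A/P, every localization of K ⊗_{A/P} (A'/PA') at a prime ideal is a regular local ring. -/
universe u

def IsRegularLocalRingP (R : Type u) [CommRing R] : Prop :=
  IsNoetherianRing R ∧ ∃ _h : IsLocalRing R, ∃ s : Finset R,
    Ideal.span (s : Set R) = IsLocalRing.maximalIdeal R ∧
      (s.card : WithBot (WithTop ℕ)) = ringKrullDim R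

open TensorProduct in
def HasGeometricallyRegularFibers (A A' : Type u) [CommRing A] [CommRing A']
    [Algebra A A'] : Prop :=
  ∀ (P : Ideal A), P.IsPrime →
    ∀ (K : Type u) [Field K] [Algebra (A ⧸ P) K]
      [Algebra (FractionRing (A ⧸ P)) K]
      [IsScalarTower (A ⧸ P) (FractionRing (A ⧸ P)) K]
      [Module.Finite (FractionRing (A ⧸ P)) K],
      ∀ (Q : Ideal (K ⊗[A ⧸ P] (A' ⧸ (P.map (algebraMap A A'))))) [Q.IsPrime],
        IsRegularLocalRingP (Localization.AtPrime Q)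

open TensorProduct IsLocalRing

/-- A field is a regular local ring. -/
lemma IsField.isRegularLocalRingP {R : Type u} [CommRing R] (hR : IsField R) :
    IsRegularLocalRingP R := by
  let _ : Field R := hR.toField
  refine ⟨inferInstance, inferInstance, ∅, ?_, ?_⟩
  · simpa using (isField_iff_maximalIdeal_eq.mp hR).symm
  · exact (ringKrullDim_eq_zero_of_isField hR).symm

/-- An essentially finite, formally unramified algebra over a domain in which all nonzero elements
of the domain become invertible is a reduced Artinian ring. -/
lemma Algebra.FormallyUnramified.isReduced_and_isArtinianRing_of_isUnit
    (B R : Type u) [CommRing B] [IsDomain B] [CommRing R] [Algebra B R]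
    [Algebra.FormallyUnramified B R] [Algebra.EssFiniteType B R]
    (hunit : ∀ b : B, b ≠ 0 → IsUnit (algebraMap B R b)) :
    IsReduced R ∧ IsArtinianRing R := by
  let L := FractionRing B
  let φ : L →+* R := IsLocalization.lift (M := nonZeroDivisors B) (g := algebraMap B R)
    fun b ↦ hunit b (nonZeroDivisors.coe_ne_zero b)
  let _ : Algebra L R := φ.toAlgebra
  have : IsScalarTower B L R :=
    .of_algebraMap_eq fun b ↦ (IsLocalization.lift_eq (M := nonZeroDivisors B) _ b).symm
  have : FormallyUnramified L R := .of_restrictScalars B L R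
  have : EssFiniteType L R := .of_comp B L R
  have : Module.Finite L R := finite_of_free L R
  exact ⟨isReduced_of_field L R, .of_finite L R⟩

/-- Let `K` be a finite separable extension of the fraction field of `k` and `B` a `k`-algebra that
is a domain, each of whose nonzero elements divides the image of a nonzero element of `k`.
Then the localizations of `K ⊗[k] B` at prime ideals are fields. -/
lemma isField_localization_atPrime_tensorProduct
    (k F B K : Type u) [CommRing k] [IsDomain k] [Field F] [Algebra k F] [IsFractionRing k F]
    [CommRing B] [IsDomain B] [Algebra k B] [Field K] [Algebra k K] [Algebra F K]
    [IsScalarTower k F K] [Module.Finite F K] [Algebra.IsSeparable F K]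
    (hdvd : ∀ b : B, b ≠ 0 → ∃ a : k, a ≠ 0 ∧ b ∣ algebraMap k B a)
    (Q : Ideal (K ⊗[k] B)) [Q.IsPrime] : IsField (Localization.AtPrime Q) := by
  have : Algebra.FormallyUnramified k F := .of_isLocalization (nonZeroDivisors k)
  have : Algebra.FormallyUnramified F K := .of_isSeparable F K
  have : Algebra.FormallyUnramified k K := .comp k F K
  have : Algebra.EssFiniteType k F := .of_isLocalization F (nonZeroDivisors k)
  have : Algebra.EssFiniteType k K := .comp k F K
  have hinj : Function.Injective (algebraMap k K) := by
    rw [IsScalarTower.algebraMap_eq k F K]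
    exact (algebraMap F K).injective.comp (IsFractionRing.injective k F)
  have hunit (b : B) (hb : b ≠ 0) : IsUnit (algebraMap B (B ⊗[k] K) b) := by
    obtain ⟨a, ha, hba⟩ := hdvd b hb
    refine isUnit_of_dvd_unit (map_dvd (algebraMap B (B ⊗[k] K)) hba) ?_
    rw [← IsScalarTower.algebraMap_apply, ← Algebra.TensorProduct.includeRight.commutes a]
    exact (IsUnit.mk0 _ <| (map_ne_zero_iff _ hinj).mpr ha).map _
  obtain ⟨hred, hart⟩ :=
    Algebra.FormallyUnramified.isReduced_and_isArtinianRing_of_isUnit B (B ⊗[k] K) hunit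
  let e : K ⊗[k] B ≃ₐ[k] B ⊗[k] K := Algebra.TensorProduct.comm k K B
  have : IsReduced (K ⊗[k] B) := isReduced_of_injective e e.injective
  have : IsArtinianRing (K ⊗[k] B) := e.symm.toRingEquiv.surjective.isArtinianRing
  exact IsArtinianRing.isField_of_isReduced_of_isLocalRing _

/-- In a local domain of dimension at most one, every nonzero element divides a power of every
nonunit. -/
lemma IsLocalRing.exists_dvd_pow {R : Type*} [CommRing R] [IsDomain R] [IsLocalRing R]
    [Ring.KrullDimLE 1 R] {a b : R} (hb : b ≠ 0) (ha : a ∈ maximalIdeal R) :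
    ∃ n : ℕ, b ∣ a ^ n := by
  have hrad : a ∈ (Ideal.span {b}).radical := by
    rw [Ideal.radical_eq_sInf, Ideal.mem_sInf]
    rintro p ⟨hbp, hp⟩
    have hpbot : p ≠ ⊥ := by
      rintro rfl
      exact hb (by simpa using hbp)
    rwa [eq_maximalIdeal (hp.isMaximal_of_ne_bot hpbot)]
  obtain ⟨n, hn⟩ := hrad
  exact ⟨n, Ideal.mem_span_singleton.mp hn⟩

theorem stmt7 (A A' : Type u) [CommRing A] [CommRing A']
    [IsDomain A] [IsDomain A'] [IsNoetherianRing A] [IsNoetherianRing A']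
    [IsLocalRing A] [IsLocalRing A']
    (hdimA : ringKrullDim A = 1) (hdimA' : ringKrullDim A' = 1)
    [Algebra A A'] [IsLocalHom (algebraMap A A')] (hflat : Module.Flat A A')
    (hmax : (IsLocalRing.maximalIdeal A).map (algebraMap A A')
      = IsLocalRing.maximalIdeal A')
    [Algebra ℚ A] :
    Module.Flat A A' ∧ HasGeometricallyRegularFibers A A' := by
  refine ⟨hflat, fun P hP K _ _ _ _ _ Q _ ↦ IsField.isRegularLocalRingP ?_⟩
  have : Ring.KrullDimLE 1 A := Ring.krullDimLE_iff.mpr hdimA.le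
  have : Ring.KrullDimLE 1 A' := Ring.krullDimLE_iff.mpr hdimA'.le
  have : CharZero (FractionRing (A ⧸ P)) :=
    charZero_of_injective_algebraMap (algebraMap ℚ (FractionRing (A ⧸ P))).injective
  obtain rfl | hPbot := eq_or_ne P ⊥
  · have hbot : (⊥ : Ideal A).map (algebraMap A A') = ⊥ := Ideal.map_bot
    have : ((⊥ : Ideal A).map (algebraMap A A')).IsPrime := hbot ▸ Ideal.isPrime_bot
    refine isField_localization_atPrime_tensorProduct _ (FractionRing (A ⧸ (⊥ : Ideal A))) _ _
      (fun b hb ↦ ?_) Q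
    obtain ⟨b, rfl⟩ := Ideal.Quotient.mk_surjective b
    have hb' : b ≠ 0 := by
      rintro rfl
      exact hb (map_zero _)
    have hA : maximalIdeal A ≠ ⊥ := fun h ↦ by
      simp [ringKrullDim_eq_zero_of_isField (isField_iff_maximalIdeal_eq.mpr h)] at hdimA
    obtain ⟨a, ham, ha⟩ := Submodule.exists_mem_ne_zero_of_ne_bot hA
    obtain ⟨n, hn⟩ := exists_dvd_pow hb' (hmax ▸ Ideal.mem_map_of_mem (algebraMap A A') ham)
    refine ⟨Ideal.Quotient.mk ⊥ (a ^ n), ?_, ?_⟩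
    · rw [Ne, Ideal.Quotient.eq_zero_iff_mem, Ideal.mem_bot]
      exact pow_ne_zero n ha
    · rw [← map_pow] at hn
      exact map_dvd (Ideal.Quotient.mk _) hn
  · obtain rfl := eq_maximalIdeal (hP.isMaximal_of_ne_bot hPbot)
    have : ((maximalIdeal A).map (algebraMap A A')).IsMaximal := hmax ▸ maximalIdeal.isMaximal A'
    let _ : Field (A' ⧸ (maximalIdeal A).map (algebraMap A A')) := Ideal.Quotient.field _
    exact isField_localization_atPrime_tensorProduct _ (FractionRing (A ⧸ maximalIdeal A)) _ _
      (fun b hb ↦ ⟨1, one_ne_zero, (IsUnit.mk0 b hb).dvd⟩) Q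
end

section
/- Let u : A → A' be an injective local homomorphism of Noetherian local domains of Krull dimension one. Then Frac(A) ⊗_A A' is a field, isomorphic to the fraction field of A'. -/
universe u

open TensorProduct

/-- In a local domain of Krull dimension at most one, every nonzero element divides some power of
any given element of the maximal ideal. -/
theorem IsLocalRing.exists_dvd_pow_of_mem_maximalIdeal {R : Type*} [CommRing R] [IsDomain R]
    [IsLocalRing R] [Ring.KrullDimLE 1 R] {s m : R} (hs : s ≠ 0) (hm : m ∈ maximalIdeal R) :
    ∃ n : ℕ, s ∣ m ^ n := by
  simp_rw [← Ideal.mem_span_singleton]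
  change m ∈ (Ideal.span {s}).radical
  rw [Ideal.radical_eq_sInf, Ideal.mem_sInf]
  rintro P ⟨hsP, hP⟩
  have hP0 : P ≠ ⊥ := by
    rintro rfl
    exact hs (by simpa using hsP)
  rwa [IsLocalRing.eq_maximalIdeal (hP.isMaximal_of_ne_bot hP0)]

attribute [local instance] Algebra.TensorProduct.rightAlgebra in
/-- The generic fiber of an injective local homomorphism from a local domain that is not a field
to a local domain of Krull dimension at most one is the fraction field of the target. -/
theorem IsFractionRing.tensorRight_of_isLocalHom (A A' K : Type*) [CommRing A] [CommRing A']
    [IsDomain A] [IsDomain A'] [IsLocalRing A] [IsLocalRing A'] [Ring.KrullDimLE 1 A']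
    [CommRing K] [Algebra A K] [IsFractionRing A K]
    [Algebra A A'] [IsLocalHom (algebraMap A A')] (hA : ¬ IsField A)
    (hinj : Function.Injective (algebraMap A A')) :
    IsFractionRing A' (K ⊗[A] A') := by
  have hle : Algebra.algebraMapSubmonoid A' (nonZeroDivisors A) ≤ nonZeroDivisors A' :=
    map_le_nonZeroDivisors_of_injective _ hinj le_rfl
  obtain ⟨m, hm, hm0⟩ := Submodule.exists_mem_ne_zero_of_ne_bot
    (mt IsLocalRing.isField_iff_maximalIdeal_eq.mpr hA)
  have hm' : algebraMap A A' m ∈ IsLocalRing.maximalIdeal A' := by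
    simpa using hm
  refine IsLocalization.of_le_of_exists_dvd
    (Algebra.algebraMapSubmonoid A' (nonZeroDivisors A)) _ hle fun s hs ↦ ?_
  obtain ⟨n, hn⟩ := IsLocalRing.exists_dvd_pow_of_mem_maximalIdeal
    (nonZeroDivisors.ne_zero hs) hm'
  refine ⟨_, Algebra.mem_algebraMapSubmonoid_of_mem
    (⟨m, mem_nonZeroDivisors_of_ne_zero hm0⟩ ^ n : nonZeroDivisors A), ?_⟩
  simpa using hn

attribute [local instance] Algebra.TensorProduct.rightAlgebra in
theorem stmt8 (A A' : Type u) [CommRing A] [CommRing A'] [IsDomain A] [IsDomain A']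
    [IsNoetherianRing A] [IsNoetherianRing A'] [IsLocalRing A] [IsLocalRing A']
    (hdimA : ringKrullDim A = 1) (hdimA' : ringKrullDim A' = 1)
    [Algebra A A'] (hinj : Function.Injective (algebraMap A A'))
    [IsLocalHom (algebraMap A A')] :
    IsField ((FractionRing A) ⊗[A] A') ∧
      Nonempty (((FractionRing A) ⊗[A] A') ≃+* FractionRing A') := by
  have : Ring.KrullDimLE 1 A' := Ring.krullDimLE_iff.mpr hdimA'.le
  have hA : ¬ IsField A := fun h ↦ by
    simp [ringKrullDim_eq_zero_of_isField h] at hdimA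
  have := IsFractionRing.tensorRight_of_isLocalHom A A' (FractionRing A) hA hinj
  let e : ((FractionRing A) ⊗[A] A') ≃+* FractionRing A' :=
    (IsLocalization.algEquiv (nonZeroDivisors A') _ _).toRingEquiv
  exact ⟨e.toMulEquiv.isField (Field.toIsField _), ⟨e⟩⟩
end
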